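/- arXiv:2603.18162 — 15 statements merged into one kernel-verified Lean document; each statement's English description precedes it below -/
import Mathlib

section
/- Let d ≥ 1 and D ≥ 3 be integers and let A ⊆ ℕ^d be of smooth type for D. Then the d(D−2)-fold sumset of A is the full discrete simplex: d(D−2)·A = Δ_{d(D−2)}; that is, a point y ∈ ℕ^d can be written as a sum of exactly d(D−2) elements of A if and only if |y| ≤ d(D−2)·D. -/
open Pointwise

/-- The `s`-fold sumset of `A`: `0A = {0}` and `(s+1)A = A + sA`. -/
def sumset {M : Type*} [AddMonoid M] (A : Set M) : ℕ → Set M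
  | 0 => {0}
  | s + 1 => A + sumset A s

/-- `A ⊆ ℕ^d` is of smooth type for `D`: all elements have coordinate sum `≤ D`,
and `A` contains `0`, `εᵢ`, `(D-1)εᵢ` and `εᵢ + (D-1)εⱼ` for all `i, j`. -/
def SmoothType (d D : ℕ) (A : Set (Fin d → ℕ)) : Prop :=
  (∀ a ∈ A, ∑ j, a j ≤ D) ∧
  (0 : Fin d → ℕ) ∈ A ∧
  (∀ i : Fin d, Pi.single i 1 ∈ A) ∧
  (∀ i : Fin d, Pi.single i (D - 1) ∈ A) ∧
  (∀ i j : Fin d, Pi.single i 1 + Pi.single j (D - 1) ∈ A)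


lemma aux_split {d : ℕ} (s : ℕ) (x : Fin d → ℕ) (hx : ∑ j, x j ≤ s + 1) :
    ∃ x' : Fin d → ℕ, ∑ j, x' j ≤ s ∧ (x = x' ∨ ∃ i, x = Pi.single i 1 + x') := by
  by_cases h : ∑ j, x j ≤ s
  · exact ⟨x, h, Or.inl rfl⟩
  · obtain ⟨i, -, hi⟩ := Finset.exists_ne_zero_of_sum_ne_zero (s := Finset.univ) (f := x) (by omega)
    have e : x = Pi.single i 1 + (x - Pi.single i 1) := by
      funext j
      by_cases hj : j = i
      · subst hj
        simp
        omega
      · simp [hj]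
    refine ⟨x - Pi.single i 1, ?_, Or.inr ⟨i, e⟩⟩
    have h2 : ∑ j, x j = ∑ j, (Pi.single i 1 + (x - Pi.single i 1) : Fin d → ℕ) j := by
      rw [← e]
    simp only [Pi.add_apply, Finset.sum_add_distrib, Finset.sum_pi_single', Finset.mem_univ,
      if_true, Fintype.sum_pi_single'] at h2
    omega

lemma aux_mem {d D : ℕ} {A : Set (Fin d → ℕ)} (hA : SmoothType d D A) (s : ℕ) :
    ∀ x z : Fin d → ℕ, ∑ j, x j ≤ s → ∑ j, z j ≤ s → x + (D - 1) • z ∈ sumset A s := by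
  obtain ⟨-, h0, h1, h2, h3⟩ := hA
  induction s with
  | zero =>
    intro x z hx hz
    have hx' : x = 0 := by
      funext j
      exact (Finset.sum_eq_zero_iff.1 (Nat.le_zero.1 hx)) j (Finset.mem_univ j)
    have hz' : z = 0 := by
      funext j
      exact (Finset.sum_eq_zero_iff.1 (Nat.le_zero.1 hz)) j (Finset.mem_univ j)
    simp [sumset, hx', hz']
  | succ s ih =>
    intro x z hx hz
    obtain ⟨x', hx', ex⟩ := aux_split s x hx
    obtain ⟨z', hz', ez⟩ := aux_split s z hz
    have key := ih x' z' hx' hz'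
    have hs : ∀ j : Fin d, (D - 1) • (Pi.single j 1 : Fin d → ℕ) = Pi.single j (D - 1) := by
      intro j
      rw [← Pi.single_smul]
      simp
    rw [sumset, Set.mem_add]
    rcases ex with rfl | ⟨i, rfl⟩ <;> rcases ez with rfl | ⟨j, rfl⟩
    · exact ⟨0, h0, _, key, by simp⟩
    · exact ⟨_, h2 j, _, key, by rw [smul_add, hs]; abel⟩
    · exact ⟨_, h1 i, _, key, by abel⟩
    · exact ⟨_, h3 i j, _, key, by rw [smul_add, hs]; abel⟩

lemma aux_sub {d : ℕ} (f : Fin d → ℕ) (k : ℕ) :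
    k ≤ ∑ j, f j → ∃ z : Fin d → ℕ, (∀ j, z j ≤ f j) ∧ ∑ j, z j = k := by
  induction k with
  | zero => intro _; exact ⟨0, by simp, by simp⟩
  | succ k ih =>
    intro h
    obtain ⟨z, hz, e⟩ := ih (by omega)
    obtain ⟨i, -, hi⟩ := Finset.exists_lt_of_sum_lt (s := Finset.univ) (f := z) (g := f) (by omega)
    refine ⟨z + Pi.single i 1, ?_, ?_⟩
    · intro j
      by_cases hj : j = i
      · subst hj
        simp
        omega
      · simp [hj, hz j]
    · simp only [Pi.add_apply, Finset.sum_add_distrib, Fintype.sum_pi_single', e]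

lemma aux_le {d D : ℕ} {A : Set (Fin d → ℕ)} (hA : SmoothType d D A) (s : ℕ) :
    ∀ y ∈ sumset A s, ∑ j, y j ≤ s * D := by
  induction s with
  | zero => intro y hy; simp [sumset] at hy; simp [hy]
  | succ s ih =>
    intro y hy
    rw [sumset, Set.mem_add] at hy
    obtain ⟨a, ha, b, hb, rfl⟩ := hy
    have := hA.1 a ha
    have := ih b hb
    simp only [Pi.add_apply, Finset.sum_add_distrib]
    rw [Nat.add_mul]
    omega

theorem stmt_0 (d D : ℕ) (hd : 1 ≤ d) (hD : 3 ≤ D)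
    (A : Set (Fin d → ℕ)) (hA : SmoothType d D A) :
    sumset A (d * (D - 2)) = {y : Fin d → ℕ | ∑ j, y j ≤ d * (D - 2) * D} := by
  apply Set.Subset.antisymm
  · exact aux_le hA _
  intro y hy
  simp only [Set.mem_ofPred_eq] at hy
  set s := d * (D - 2) with hs
  have main : ∃ z : Fin d → ℕ, (∀ j, z j ≤ y j / (D - 1)) ∧ ∑ j, z j ≤ s ∧
      ∑ j, y j ≤ s + (D - 1) * ∑ j, z j := by
    by_cases h : ∑ j, y j / (D - 1) ≤ s
    · refine ⟨fun j => y j / (D - 1), fun j => le_rfl, h, ?_⟩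
      have : ∀ j ∈ Finset.univ, y j ≤ (D - 2) + (D - 1) * (y j / (D - 1)) := by
        intro j _
        have h1 := Nat.div_add_mod (y j) (D - 1)
        have h2 := Nat.mod_lt (y j) (show D - 1 > 0 by omega)
        omega
      have h3 := Finset.sum_le_sum this
      rw [Finset.sum_add_distrib, ← Finset.mul_sum] at h3
      simpa [hs] using h3
    · obtain ⟨z, hz, e⟩ := aux_sub (fun j => y j / (D - 1)) s (by omega)
      refine ⟨z, hz, e.le, ?_⟩
      rw [e]
      obtain ⟨E, rfl⟩ : ∃ E, D = E + 1 := ⟨D - 1, by omega⟩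
      simp only [Nat.add_sub_cancel]
      linarith
  obtain ⟨z, hz, h1, h2⟩ := main
  have e : y = (y - (D - 1) • z) + (D - 1) • z := by
    funext j
    have : (D - 1) * z j ≤ y j :=
      (Nat.mul_le_mul_left _ (hz j)).trans (Nat.mul_div_le _ _)
    simp only [Pi.add_apply, Pi.sub_apply, Pi.smul_apply, smul_eq_mul]
    omega
  rw [e]
  refine aux_mem hA s _ _ ?_ h1
  have h3 : ∑ j, y j = ∑ j, ((y - (D - 1) • z) + (D - 1) • z) j := by rw [← e]
  simp only [Pi.add_apply, Finset.sum_add_distrib] at h3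
  have h4 : ∑ j, ((D - 1) • z) j = (D - 1) * ∑ j, z j := by
    simp [Finset.mul_sum]
  omega
end

section
/- Let d ≥ 1 and D ≥ 3 be integers and let A ⊆ ℕ^d be of smooth type for D. If z ∈ ℕ^d satisfies |z| = (d−1)(D−2)·D, then z belongs to the (d−1)(D−2)-fold sumset (d−1)(D−2)·A. -/
open Pointwise

theorem aux_pair (d D : ℕ) (A : Set (Fin d → ℕ))
    (hA : ∀ i j : Fin d, Pi.single i 1 + Pi.single j (D - 1) ∈ A) (N : ℕ) :
    ∀ x y : Fin d → ℕ, ∑ j, x j = N → ∑ j, y j = N →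
      x + (D - 1) • y ∈ sumset A N := by
  have key : ∀ (n : ℕ) (x : Fin d → ℕ), ∑ j, x j = n + 1 →
      ∃ (i : Fin d) (x' : Fin d → ℕ), x = Pi.single i 1 + x' ∧ ∑ j, x' j = n := by
    intro n x hx
    obtain ⟨i, -, hi⟩ := Finset.exists_ne_zero_of_sum_ne_zero (s := Finset.univ) (f := x) (by omega)
    have h : x = Pi.single i 1 + (x - Pi.single i 1) := by
      ext k
      by_cases hk : k = i
      · subst hk; simp; omega
      · simp [hk]
    refine ⟨i, x - Pi.single i 1, h, ?_⟩
    have h2 : ∑ j, x j = ∑ j, (Pi.single i 1 + (x - Pi.single i 1) : Fin d → ℕ) j := by rw [← h]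
    simp only [Pi.add_apply, Finset.sum_add_distrib] at h2
    rw [Finset.sum_pi_single'] at h2
    simp at h2
    simp only [Pi.sub_apply]
    omega
  induction N with
  | zero =>
    intro x y hx hy
    have h1 : x = 0 := by ext k; simp at hx; simp [hx k]
    have h2 : y = 0 := by ext k; simp at hy; simp [hy k]
    simp [h1, h2, sumset]
  | succ n ih =>
    intro x y hx hy
    obtain ⟨i, x', rfl, hx'⟩ := key n x hx
    obtain ⟨j, y', rfl, hy'⟩ := key n y hy
    refine Set.mem_add.2 ⟨_, hA i j, _, ih x' y' hx' hy', ?_⟩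
    have : (Pi.single j (D - 1) : Fin d → ℕ) = (D - 1) • Pi.single j 1 := by
      rw [← Pi.single_smul]; simp
    rw [this, smul_add]
    abel

theorem aux_choose (d : ℕ) (q : Fin d → ℕ) (N : ℕ) (h : N ≤ ∑ j, q j) :
    ∃ y : Fin d → ℕ, y ≤ q ∧ ∑ j, y j = N := by
  induction N with
  | zero => exact ⟨0, fun _ => Nat.zero_le _, by simp⟩
  | succ n ih =>
    obtain ⟨y, hy, hs⟩ := ih (by omega)
    obtain ⟨j, -, hj⟩ := Finset.exists_lt_of_sum_lt (s := Finset.univ) (f := y) (g := q) (by omega)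
    refine ⟨y + Pi.single j 1, fun k => ?_, ?_⟩
    · by_cases hk : k = j
      · subst hk; simp; omega
      · simpa [hk] using hy k
    · simp [Finset.sum_add_distrib, hs]

theorem stmt_1 (d D : ℕ) (hd : 1 ≤ d) (hD : 3 ≤ D)
    (A : Set (Fin d → ℕ)) (hA : SmoothType d D A)
    (z : Fin d → ℕ) (hz : ∑ j, z j = (d - 1) * (D - 2) * D) :
    z ∈ sumset A ((d - 1) * (D - 2)) := by
  obtain ⟨e, rfl⟩ : ∃ e, d = e + 1 := ⟨d - 1, by omega⟩
  obtain ⟨m, rfl⟩ : ∃ m, D = m + 2 := ⟨D - 2, by omega⟩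
  have e1 : e + 1 - 1 = e := by omega
  have e2 : m + 2 - 2 = m := by omega
  have e3 : m + 2 - 1 = m + 1 := by omega
  have hP := hA.2.2.2.2
  have hpair := aux_pair (e + 1) (m + 2) A hP (e * m)
  rw [e1, e2] at hz ⊢
  rw [e3] at hpair
  have hq : e * m ≤ ∑ j, z j / (m + 1) := by
    have h1 : ∑ j, z j ≤ ∑ j : Fin (e + 1), ((m + 1) * (z j / (m + 1)) + m) := by
      refine Finset.sum_le_sum fun j _ => ?_
      have := Nat.div_add_mod (z j) (m + 1)
      have := Nat.mod_lt (z j) (Nat.succ_pos m)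
      simp only [Nat.succ_eq_add_one] at this
      omega
    rw [Finset.sum_add_distrib, ← Finset.mul_sum, hz] at h1
    simp at h1
    by_contra! hlt
    generalize ∑ j, z j / (m + 1) = Q at *
    nlinarith
  obtain ⟨y, hy, hs⟩ := aux_choose _ _ _ hq
  have hle : ∀ j, (m + 1) * y j ≤ z j := fun j =>
    (Nat.mul_le_mul_left _ (hy j)).trans (Nat.mul_div_le _ _)
  have hzx : z = (z - (m + 1) • y) + (m + 1) • y := by
    ext j
    have := hle j
    simp
    omega
  rw [hzx]
  refine hpair _ _ ?_ hs
  have h2 : ∑ j, z j = ∑ j, ((z - (m + 1) • y) + (m + 1) • y) j := by rw [← hzx]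
  simp only [Pi.add_apply, Finset.sum_add_distrib, Pi.smul_apply, smul_eq_mul,
    ← Finset.mul_sum, hs, hz] at h2
  nlinarith
end

section
/- Let D ≥ 3 be an integer and let B = {0, 1, D−1, D} ⊆ ℕ. Then every natural number y with y ≤ D(D−2) belongs to the (D−2)-fold sumset (D−2)·B, i.e. y can be written as a sum of exactly D−2 elements of B (with repetition allowed). -/
open Pointwise

theorem sumset_aux (m s : ℕ) : ∀ k r : ℕ, k ≤ s → r ≤ s →
    k * m + r ∈ sumset ({0, 1, m, m + 1} : Set ℕ) s := by
  induction s with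
  | zero =>
    intro k r hk hr
    obtain rfl : k = 0 := by omega
    obtain rfl : r = 0 := by omega
    simp [sumset]
  | succ s ih =>
    intro k r hk hr
    show _ ∈ _ + _
    rw [Set.mem_add]
    rcases k with _ | k <;> rcases r with _ | r
    · exact ⟨0, by simp, _, ih 0 0 (by omega) (by omega), by ring⟩
    · exact ⟨1, by simp, _, ih 0 r (by omega) (by omega), by ring⟩
    · exact ⟨m, by simp, _, ih k 0 (by omega) (by omega), by ring⟩
    · exact ⟨m + 1, by simp, _, ih k r (by omega) (by omega), by ring⟩

theorem stmt_2 (D : ℕ) (hD : 3 ≤ D) (y : ℕ) (hy : y ≤ D * (D - 2)) :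
    y ∈ sumset ({0, 1, D - 1, D} : Set ℕ) (D - 2) := by
  obtain ⟨n, rfl⟩ : ∃ n, D = n + 2 := ⟨D - 2, by omega⟩
  have e1 : n + 2 - 2 = n := by omega
  have e2 : n + 2 - 1 = n + 1 := by omega
  rw [e1] at hy
  rw [e1, e2]
  have hr : y % (n + 1) ≤ n := Nat.lt_succ_iff.mp (Nat.mod_lt _ (by omega))
  have hk : y / (n + 1) ≤ n := by
    apply Nat.lt_succ_iff.mp
    rw [Nat.div_lt_iff_lt_mul (by omega)]
    nlinarith
  have h := sumset_aux (n + 1) n _ _ hk hr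
  rw [Nat.div_add_mod'] at h
  exact h
end

section
/- Let d ≥ 1, D ≥ 2 and s be natural numbers. Then Δ_s + {0, Dε₁, …, Dε_d} = Δ_{s+1} (pointwise sum of sets in ℕ^d) if and only if s·D ≥ d·(D−1) (equivalently, s ≥ d − d/D as rational numbers). -/
open Pointwise

theorem exists_bdd (m : ℕ) : ∀ (d n : ℕ), n ≤ d * m →
    ∃ y : Fin d → ℕ, (∀ i, y i ≤ m) ∧ ∑ j, y j = n := by
  intro d
  induction d with
  | zero => 
    intro n hn
    refine ⟨fun _ => 0, fun i => Nat.zero_le _, ?_⟩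
    simp at hn
    simp [hn]
  | succ d ih =>
    intro n hn
    rw [Nat.succ_mul] at hn
    obtain ⟨y, hy, hs⟩ := ih (n - min n m) (by omega)
    refine ⟨Fin.cons (min n m) y, ?_, ?_⟩
    · intro i
      refine Fin.cases ?_ (fun j => ?_) i
      · simp
      · simpa using hy j
    · rw [Fin.sum_univ_succ]
      simp only [Fin.cons_zero, Fin.cons_succ, hs]
      omega

theorem stmt_3 (d D s : ℕ) (hd : 1 ≤ d) (hD : 2 ≤ D) :
    ({y : Fin d → ℕ | ∑ j, y j ≤ s * D} +
        insert (0 : Fin d → ℕ) (Set.range fun i : Fin d => Pi.single i D)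
      = {y : Fin d → ℕ | ∑ j, y j ≤ (s + 1) * D})
    ↔ d * (D - 1) ≤ s * D := by
  constructor
  · intro h
    by_contra hlt
    obtain ⟨y, hy, hs⟩ := exists_bdd (D - 1) d (s * D + 1) (by omega)
    have hm : y ∈ {y : Fin d → ℕ | ∑ j, y j ≤ (s + 1) * D} := by
      simp only [Set.mem_setOf_eq, hs, Nat.succ_mul]
      omega
    rw [← h] at hm
    obtain ⟨a, ha, b, hb, rfl⟩ := Set.mem_add.1 hm
    simp only [Set.mem_setOf_eq] at ha
    rcases hb with rfl | ⟨i, rfl⟩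
    · simp only [add_zero] at hs
      omega
    · have := hy i
      simp at this
      omega
  · intro h
    ext y
    constructor
    · intro hm
      obtain ⟨a, ha, b, hb, rfl⟩ := Set.mem_add.1 hm
      simp only [Set.mem_setOf_eq, Nat.succ_mul] at ha ⊢
      rcases hb with rfl | ⟨i, rfl⟩
      · simp only [add_zero]
        omega
      · simp only [Pi.add_apply, Finset.sum_add_distrib, Finset.sum_pi_single']
        simp
        omega
    · intro hm
      simp only [Set.mem_setOf_eq, Nat.succ_mul] at hm
      by_cases hc : ∑ j, y j ≤ s * D
      · exact Set.mem_add.2 ⟨y, hc, 0, Set.mem_insert _ _, add_zero y⟩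
      · have hi : ∃ i, D ≤ y i := by
          by_contra! hall
          have : ∑ j, y j ≤ ∑ j : Fin d, (D - 1) :=
            Finset.sum_le_sum fun j _ => by have := hall j; omega
          simp at this
          omega
        obtain ⟨i, hi⟩ := hi
        have he : y - Pi.single i D + Pi.single i D = y := by
          apply tsub_add_cancel_of_le
          intro j
          by_cases hj : j = i
          · subst hj
            simpa using hi
          · simp [hj]
        refine Set.mem_add.2 ⟨y - Pi.single i D, ?_, Pi.single i D,
          Set.mem_insert_of_mem _ ⟨i, rfl⟩, he⟩
        have h2 : ∑ j, (y - Pi.single i D + Pi.single i D : Fin d → ℕ) j = ∑ j, y j := by rw [he]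
        simp only [Pi.add_apply, Finset.sum_add_distrib] at h2
        have h3 : ∑ j, (Pi.single i D : Fin d → ℕ) j = D := by simp
        rw [h3] at h2
        simp only [Set.mem_setOf_eq]
        omega
end

section
/- Let d ≥ 1 and D ≥ 2 be integers and let A ⊆ ℕ^d be of smooth type for D. Then sA = Δ_s for every natural number s ≥ d(D−2). -/
open Pointwise

lemma split_aux {d : ℕ} (s : ℕ) (u : Fin d → ℕ) (hu : ∑ j, u j ≤ s + 1) :
    ∃ b u' : Fin d → ℕ, (b = 0 ∨ ∃ i, b = Pi.single i 1) ∧ u = b + u' ∧ ∑ j, u' j ≤ s := by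
  by_cases h : u = 0
  · exact ⟨0, 0, Or.inl rfl, by simp [h], by simp⟩
  · obtain ⟨i, hi⟩ := Function.ne_iff.mp h
    have hi' : 1 ≤ u i := Nat.one_le_iff_ne_zero.mpr hi
    have he : u = Pi.single i 1 + (u - Pi.single i 1) := by
      ext j
      by_cases hj : j = i
      · subst hj; simp; omega
      · simp [hj]
    refine ⟨Pi.single i 1, u - Pi.single i 1, Or.inr ⟨i, rfl⟩, he, ?_⟩
    have h2 : ∑ j, u j = ∑ j, ((Pi.single i 1 : Fin d → ℕ) j + (u - Pi.single i 1 : Fin d → ℕ) j) :=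
      Finset.sum_congr rfl fun j _ => congrFun he j
    rw [Finset.sum_add_distrib, Finset.sum_pi_single'] at h2
    simp only [Finset.mem_univ, if_true] at h2
    omega

lemma sub_aux {d : ℕ} (q : Fin d → ℕ) (s : ℕ) (hs : s ≤ ∑ j, q j) :
    ∃ v : Fin d → ℕ, v ≤ q ∧ ∑ j, v j = s := by
  induction s with
  | zero => exact ⟨0, fun j => Nat.zero_le _, by simp⟩
  | succ s ih =>
    obtain ⟨v, hv, hsum⟩ := ih (by omega)
    obtain ⟨i, -, hi⟩ := Finset.exists_lt_of_sum_lt (s := Finset.univ) (f := v) (g := q) (by omega)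
    refine ⟨v + Pi.single i 1, fun j => ?_, ?_⟩
    · by_cases hj : j = i
      · subst hj; simp; omega
      · simpa [hj] using hv j
    · simp only [Pi.add_apply]
      rw [Finset.sum_add_distrib, Finset.sum_pi_single', hsum]
      simp

lemma mem_aux {d D : ℕ} {A : Set (Fin d → ℕ)} (hA : SmoothType d D A) (s : ℕ) :
    ∀ u v : Fin d → ℕ, ∑ j, u j ≤ s → ∑ j, v j ≤ s → u + (D - 1) • v ∈ sumset A s := by
  induction s with
  | zero =>
    intro u v hu hv
    have h1 : u = 0 := by
      ext j; simpa using Finset.sum_eq_zero_iff.mp (Nat.le_zero.mp hu) j (Finset.mem_univ j)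
    have h2 : v = 0 := by
      ext j; simpa using Finset.sum_eq_zero_iff.mp (Nat.le_zero.mp hv) j (Finset.mem_univ j)
    simp [sumset, h1, h2]
  | succ s ih =>
    intro u v hu hv
    obtain ⟨-, h0, h1, h2, h3⟩ := hA
    obtain ⟨b, u', hb, rfl, hu'⟩ := split_aux s u hu
    obtain ⟨c, v', hc, rfl, hv'⟩ := split_aux s v hv
    have key : ∀ i : Fin d, (D - 1) • (Pi.single i 1 : Fin d → ℕ) = Pi.single i (D - 1) := by
      intro i; rw [← Pi.single_smul]; simp
    refine Set.mem_add.mpr ⟨b + (D - 1) • c, ?_, u' + (D - 1) • v', ih _ _ hu' hv', ?_⟩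
    · rcases hb with rfl | ⟨i, rfl⟩ <;> rcases hc with rfl | ⟨j, rfl⟩
      · simpa using h0
      · rw [key, zero_add]; exact h2 j
      · simpa using h1 i
      · rw [key]; exact h3 i j
    · rw [smul_add]; abel

theorem stmt_4 (d D : ℕ) (hd : 1 ≤ d) (hD : 2 ≤ D)
    (A : Set (Fin d → ℕ)) (hA : SmoothType d D A)
    (s : ℕ) (hs : d * (D - 2) ≤ s) :
    sumset A s = {y : Fin d → ℕ | ∑ j, y j ≤ s * D} := by
  apply Set.Subset.antisymm
  · clear hs
    induction s with
    | zero => intro y hy; have : y = 0 := hy; simp [this]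
    | succ s ih =>
      rintro _ ⟨a, ha, t, ht, rfl⟩
      have h1 := hA.1 a ha
      have h2 : ∑ j, t j ≤ s * D := ih ht
      simp only [Set.mem_setOf_eq, Pi.add_apply, Finset.sum_add_distrib]
      linarith
  · intro y hy
    have hy : ∑ j, y j ≤ s * D := hy
    have main : ∀ v : Fin d → ℕ, (D - 1) • v ≤ y → ∑ j, v j ≤ s →
        ∑ j, y j ≤ (D - 1) * ∑ j, v j + s → y ∈ sumset A s := by
      intro v hvy hv hle
      have he : y = (y - (D - 1) • v) + (D - 1) • v := (tsub_add_cancel_of_le hvy).symm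
      rw [he]
      refine mem_aux hA s _ _ ?_ hv
      have h2 : ∑ j, y j = ∑ j, ((y - (D - 1) • v : Fin d → ℕ) j + (D - 1) * v j) :=
        Finset.sum_congr rfl fun j _ => congrFun he j
      rw [Finset.sum_add_distrib, ← Finset.mul_sum] at h2
      omega
    obtain ⟨E, rfl⟩ : ∃ E, D = E + 2 := ⟨D - 2, by omega⟩
    simp only [show E + 2 - 1 = E + 1 by omega, show E + 2 - 2 = E by omega] at *
    have hqy : ∀ j, (E + 1) * (y j / (E + 1)) ≤ y j := fun j => Nat.mul_div_le _ _
    rcases le_total (∑ j, y j / (E + 1)) s with hQ | hQ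
    · refine main (fun j => y j / (E + 1)) hqy hQ ?_
      have : ∑ j, y j ≤ ∑ j, ((E + 1) * (y j / (E + 1)) + E) := by
        refine Finset.sum_le_sum fun j _ => ?_
        have h1 := Nat.div_add_mod (y j) (E + 1)
        have h2 := Nat.mod_lt (y j) (Nat.succ_pos E)
        simp only [Nat.succ_eq_add_one] at h2
        omega
      rw [Finset.sum_add_distrib, ← Finset.mul_sum] at this
      simp only [Finset.sum_const, Finset.card_univ, Fintype.card_fin, smul_eq_mul] at this
      omega
    · obtain ⟨v, hv, hvs⟩ := sub_aux _ s hQ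
      refine main v (fun j => ?_) hvs.le ?_
      · exact (Nat.mul_le_mul_left (E + 1) (hv j)).trans (hqy j)
      · rw [hvs]; linarith
end

section
/- Let d ≥ 1 and D ≥ 2 be integers and let A = {x ∈ ℕ^d : |x| ≤ D} = Δ₁. Then sA = Δ_s for every s ∈ ℕ, and the sumsets regularity of A equals σ(A) = d − ⌊d/D⌋. -/
open Pointwise

/-- The discrete simplex `Δ_s = {y ∈ ℕ^d : |y| ≤ sD}`. -/
def Delta (d D s : ℕ) : Set (Fin d → ℕ) := {y | ∑ j, y j ≤ s * D}

/-- The set `{0, Dε₁, …, Dε_d}`. -/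
def Erays (d D : ℕ) : Set (Fin d → ℕ) :=
  insert 0 (Set.range fun i : Fin d => Pi.single i D)

theorem exists_le_sum {d : ℕ} (y : Fin d → ℕ) (n : ℕ) (h : n ≤ ∑ j, y j) :
    ∃ z : Fin d → ℕ, (∀ j, z j ≤ y j) ∧ ∑ j, z j = n := by
  induction n with
  | zero => exact ⟨0, by simp, by simp⟩
  | succ n ih =>
    obtain ⟨z, hz, hs⟩ := ih (by omega)
    obtain ⟨i, -, hi⟩ : ∃ i ∈ Finset.univ, z i < y i :=
      Finset.exists_lt_of_sum_lt (by omega)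
    refine ⟨z + Pi.single i 1, fun j => ?_, ?_⟩
    · by_cases hj : j = i
      · subst hj; simp; omega
      · simp [hj, hz j]
    · simp [Finset.sum_add_distrib, hs]

theorem sumset_eq_Delta (d D s : ℕ) :
    sumset {x : Fin d → ℕ | ∑ j, x j ≤ D} s = Delta d D s := by
  induction s with
  | zero =>
    ext y
    simp [sumset, Delta, funext_iff]
  | succ s ih =>
    ext y
    rw [sumset, ih, Set.mem_add]
    constructor
    · rintro ⟨a, ha, b, hb, rfl⟩
      simp only [Delta, Set.mem_ofPred_eq, Pi.add_apply, Finset.sum_add_distrib, add_mul] at *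
      omega
    · intro hy
      simp only [Delta, Set.mem_ofPred_eq, add_mul] at hy
      obtain ⟨z, hz, hs⟩ := exists_le_sum y (min D (∑ j, y j)) (min_le_right _ _)
      have e : z + (y - z) = y := by
        ext j; have := hz j; simp; omega
      refine ⟨z, by simp [hs], y - z, ?_, e⟩
      have h2 : ∑ j, z j + ∑ j, (y - z) j = ∑ j, y j := by
        rw [← Finset.sum_add_distrib]
        exact Finset.sum_congr rfl fun j _ => congrFun e j
      simp only [Delta, Set.mem_ofPred_eq]
      omega

theorem Delta_rays (d D s : ℕ) (hD : 2 ≤ D) :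
    Delta d D s + Erays d D = Delta d D (s + 1) ↔ d * (D - 1) ≤ s * D := by
  constructor
  · intro h
    by_contra! hlt
    obtain ⟨y, hy, hs⟩ := exists_le_sum (fun _ : Fin d => D - 1) (s * D + 1) (by simpa using hlt)
    have hm : y ∈ Delta d D (s + 1) := by
      simp only [Delta, Set.mem_ofPred_eq, add_mul]; omega
    rw [← h, Set.mem_add] at hm
    obtain ⟨a, ha, b, hb, hab⟩ := hm
    rcases hb with rfl | ⟨i, rfl⟩
    · simp only [Delta, Set.mem_ofPred_eq] at ha
      simp only [add_zero] at hab
      subst hab; omega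
    · have := hy i
      rw [← hab] at this
      simp at this
      omega
  · intro h
    ext y
    rw [Set.mem_add]
    constructor
    · rintro ⟨a, ha, b, hb, rfl⟩
      simp only [Delta, Set.mem_ofPred_eq, Pi.add_apply, Finset.sum_add_distrib, add_mul] at *
      rcases hb with rfl | ⟨i, rfl⟩
      · simp; omega
      · simp; omega
    · intro hy
      simp only [Delta, Set.mem_ofPred_eq, add_mul] at hy
      by_cases hc : ∑ j, y j ≤ s * D
      · exact ⟨y, hc, 0, Or.inl rfl, by simp⟩
      · obtain ⟨i, -, hi⟩ : ∃ i ∈ Finset.univ, (fun _ : Fin d => D - 1) i < y i :=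
          Finset.exists_lt_of_sum_lt (by simp; omega)
        have hi' : D - 1 < y i := hi
        have e : (y - Pi.single i D) + Pi.single i D = y := by
          ext j
          by_cases hj : j = i
          · subst hj; simp; omega
          · simp [hj]
        refine ⟨y - Pi.single i D, ?_, Pi.single i D, Or.inr ⟨i, rfl⟩, e⟩
        have h2 : ∑ j, (y - (Pi.single i D : Fin d → ℕ)) j + ∑ j, (Pi.single i D : Fin d → ℕ) j = ∑ j, y j := by
          rw [← Finset.sum_add_distrib]
          exact Finset.sum_congr rfl fun j _ => congrFun e j
        have h3 : ∑ j, (Pi.single i D : Fin d → ℕ) j = D := by simp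
        simp only [Delta, Set.mem_ofPred_eq]
        omega

theorem arith_iff (d D s : ℕ) (hD : 2 ≤ D) : d * (D - 1) ≤ s * D ↔ d - d / D ≤ s := by
  obtain ⟨m, rfl⟩ : ∃ m, D = m + 1 := ⟨D - 1, by omega⟩
  have h1 := Nat.div_add_mod d (m + 1)
  have h2 := Nat.mod_lt d (Nat.succ_pos m)
  rw [Nat.add_sub_cancel]
  generalize d / (m + 1) = q at *
  generalize d % (m + 1) = r at *
  constructor
  · intro h
    by_contra! hc
    have : s + q + 1 ≤ d := by omega
    nlinarith
  · intro h
    have : d ≤ s + q := by omega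
    nlinarith

theorem stmt_7 (d D : ℕ) (hd : 1 ≤ d) (hD : 2 ≤ D)
    (A : Set (Fin d → ℕ)) (hA : A = {x : Fin d → ℕ | ∑ j, x j ≤ D}) :
    (∀ s : ℕ, sumset A s = Delta d D s) ∧
    IsLeast {s : ℕ | sumset A s = Delta d D s ∧
      Delta d D s + Erays d D = Delta d D (s + 1)} (d - d / D) := by
  subst hA
  refine ⟨sumset_eq_Delta d D, ⟨sumset_eq_Delta d D _, ?_⟩, ?_⟩
  · rw [Delta_rays d D _ hD, arith_iff d D _ hD]
  · rintro s ⟨-, h⟩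
    rwa [Delta_rays d D _ hD, arith_iff d D _ hD] at h
end

section
/- Let d ≥ 1 and D ≥ 2 be integers and let A ⊆ ℕ^d be a set such that 0 ∈ A, Dεᵢ ∈ A for all 1 ≤ i ≤ d, and |a| ≤ D for every a ∈ A. Then the following are equivalent: (i) εᵢ ∈ A and (D−1)εᵢ ∈ A for all 1 ≤ i ≤ d, and εᵢ + (D−1)ε_j ∈ A for all 1 ≤ i, j ≤ d; (ii) there exists s₀ ∈ ℕ such that sA = Δ_s for all s ≥ s₀. -/
open Pointwise

lemma ss_add {M : Type*} [AddCommMonoid M] {A : Set M} {s t : ℕ} {x y : M}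
    (hx : x ∈ sumset A s) (hy : y ∈ sumset A t) : x + y ∈ sumset A (s + t) := by
  induction s generalizing x with
  | zero =>
    have : x = 0 := hx
    subst this
    simpa using hy
  | succ s ih =>
    obtain ⟨a, ha, b, hb, rfl⟩ := hx
    rw [show s + 1 + t = (s + t) + 1 by ring]
    exact ⟨a, ha, b + y, ih hb, by simp [add_assoc]⟩

lemma ss_nsmul {M : Type*} [AddCommMonoid M] {A : Set M} {x : M}
    (hx : x ∈ A) (n : ℕ) : n • x ∈ sumset A n := by
  induction n with
  | zero => simp [sumset]
  | succ n ih => exact ⟨x, hx, n • x, ih, by simp [succ_nsmul, add_comm]⟩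

lemma ss_sum {M ι : Type*} [AddCommMonoid M] {A : Set M} (S : Finset ι) (f : ι → M) (n : ι → ℕ)
    (h : ∀ i ∈ S, f i ∈ sumset A (n i)) : ∑ i ∈ S, f i ∈ sumset A (∑ i ∈ S, n i) := by
  classical
  induction S using Finset.induction_on with
  | empty => simp [sumset]
  | insert a S ha ih =>
    rw [Finset.sum_insert ha, Finset.sum_insert ha]
    exact ss_add (h a (by simp)) (ih fun i hi => h i (by simp [hi]))

lemma ss_main {M ι : Type*} [AddCommMonoid M] [Fintype ι] [Nonempty ι] (A : Set M) (D : ℕ)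
    (hD : 1 ≤ D) (e : ι → M) (he : ∀ i j, e i + (D - 1) • e j ∈ A) (y : ι → ℕ) (s : ℕ)
    (hs : Fintype.card ι * (Fintype.card ι * D) ≤ s) (hy : ∑ i, y i = s * D) :
    ∑ i, y i • e i ∈ sumset A s := by
  classical
  obtain ⟨E, rfl⟩ : ∃ E, D = E + 1 := ⟨D - 1, by omega⟩
  simp only [Nat.add_sub_cancel] at he
  obtain ⟨j, -, hj⟩ : ∃ j ∈ (Finset.univ : Finset ι),
      (Fintype.card ι * (E + 1)) * (E + 1) ≤ y j := by
    apply Finset.exists_le_of_sum_le Finset.univ_nonempty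
    rw [hy, Finset.sum_const, Finset.card_univ, smul_eq_mul, ← mul_assoc]
    exact Nat.mul_le_mul_right _ hs
  set S := (Finset.univ : Finset ι).erase j with hS
  have h1 : y j + ∑ i ∈ S, y i = s * (E + 1) := by
    rw [← hy, hS, Finset.add_sum_erase _ _ (Finset.mem_univ j)]
  set R := ∑ i ∈ S, y i % (E + 1) with hR
  set Q := ∑ i ∈ S, y i / (E + 1) with hQ
  have hQR : ∑ i ∈ S, y i = (E + 1) * Q + R := by
    rw [hQ, hR, Finset.mul_sum, ← Finset.sum_add_distrib]
    exact Finset.sum_congr rfl fun i _ => (Nat.div_add_mod _ _).symm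
  have hRle : R ≤ Fintype.card ι * (E + 1) := by
    calc R ≤ ∑ i ∈ S, (E + 1) := Finset.sum_le_sum fun i _ => (Nat.mod_lt _ (by omega)).le
      _ = S.card * (E + 1) := by simp
      _ ≤ _ := Nat.mul_le_mul_right _ (Finset.card_le_univ S)
  have hRj : E * R ≤ y j := by
    calc E * R ≤ (E + 1) * (Fintype.card ι * (E + 1)) := Nat.mul_le_mul (by omega) hRle
      _ ≤ y j := by rw [mul_comm]; exact hj
  have hQRs : Q + R ≤ s := by
    have : (Q + R) * (E + 1) ≤ s * (E + 1) := by rw [← h1, hQR]; nlinarith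
    exact Nat.le_of_mul_le_mul_right this (by omega)
  obtain ⟨m, rfl⟩ := Nat.exists_eq_add_of_le hQRs
  have hyj : y j = E * R + m * (E + 1) := by
    rw [hQR] at h1; nlinarith
  have hDe : ∀ i, (E + 1) • e i ∈ A := fun i => by
    rw [succ_nsmul, add_comm]; exact he i i
  have key : ∑ i ∈ S, ((y i / (E + 1)) • ((E + 1) • e i) +
      (y i % (E + 1)) • (e i + E • e j)) ∈
      sumset A (∑ i ∈ S, (y i / (E + 1) + y i % (E + 1))) :=
    ss_sum _ _ _ fun i _ => ss_add (ss_nsmul (hDe i) _) (ss_nsmul (he i j) _)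
  have key2 := ss_add key (ss_nsmul (hDe j) m)
  rw [Finset.sum_add_distrib, ← hQ, ← hR] at key2
  convert key2 using 1
  rw [← Finset.add_sum_erase _ _ (Finset.mem_univ j), ← hS, hyj]
  have : ∀ i ∈ S, ((y i / (E + 1)) • ((E + 1) • e i) +
      (y i % (E + 1)) • (e i + E • e j)) = y i • e i + (y i % (E + 1)) • (E • e j) := by
    intro i _
    conv_rhs => rw [← Nat.div_add_mod (y i) (E + 1), add_nsmul]
    rw [smul_add, ← add_assoc, smul_smul, mul_comm]
    simp
  rw [Finset.sum_congr rfl this, Finset.sum_add_distrib, ← Finset.sum_smul, ← hR, add_nsmul,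
    smul_smul, smul_smul, mul_comm E R]
  abel

lemma ss_le {d D : ℕ} {A : Set (Fin d → ℕ)} (hle : ∀ a ∈ A, ∑ j, a j ≤ D) (s : ℕ)
    (y : Fin d → ℕ) (hy : y ∈ sumset A s) : ∑ j, y j ≤ s * D := by
  induction s generalizing y with
  | zero =>
    have : y = 0 := hy
    simp [this]
  | succ s ih =>
    obtain ⟨a, ha, b, hb, rfl⟩ := hy
    have := hle a ha
    have := ih b hb
    simp only [Pi.add_apply, Finset.sum_add_distrib]
    nlinarith

lemma ss_one {d : ℕ} {A : Set (Fin d → ℕ)} (i : Fin d) (s : ℕ) (y : Fin d → ℕ)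
    (hy : y ∈ sumset A s) (hi : y i = 1) (hk : ∀ k, k ≠ i → y k = 0) :
    Pi.single i 1 ∈ A := by
  induction s generalizing y with
  | zero =>
    have : y = 0 := hy
    simp [this] at hi
  | succ s ih =>
    obtain ⟨a, ha, b, hb, rfl⟩ := hy
    simp only [Pi.add_apply] at hi hk
    by_cases h : a i = 1
    · convert ha
      ext k
      by_cases hki : k = i
      · subst hki; simp [h]
      · have := hk k hki
        simp [hki]; omega
    · exact ih b hb (by omega) fun k hki => by have := hk k hki; omega

lemma ss_two {d D : ℕ} {A : Set (Fin d → ℕ)} (hle : ∀ a ∈ A, ∑ j, a j ≤ D)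
    (i : Fin d) (s : ℕ) (y : Fin d → ℕ)
    (hy : y ∈ sumset A s) (hi : y i + 1 = s * D) (hk : ∀ k, k ≠ i → y k = 0) :
    Pi.single i (D - 1) ∈ A := by
  induction s generalizing y with
  | zero => simp at hi
  | succ s ih =>
    obtain ⟨a, ha, b, hb, rfl⟩ := hy
    simp only [Pi.add_apply] at hi hk
    have h1 := hle a ha
    have h2 := ss_le hle s b hb
    have h3 := Finset.single_le_sum (f := a) (fun _ _ => Nat.zero_le _) (Finset.mem_univ i)
    have h4 := Finset.single_le_sum (f := b) (fun _ _ => Nat.zero_le _) (Finset.mem_univ i)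
    rw [add_mul, one_mul] at hi
    by_cases h : a i = D
    · exact ih b hb (by omega) fun k hki => by have := hk k hki; omega
    · convert ha
      ext k
      by_cases hki : k = i
      · subst hki; simp; omega
      · have := hk k hki
        simp [hki]; omega

lemma ss_pair {d : ℕ} (f : Fin d → ℕ) {i j : Fin d} (h : i ≠ j) : f i + f j ≤ ∑ k, f k := by
  rw [← Finset.sum_pair h]
  exact Finset.sum_le_sum_of_subset (Finset.subset_univ _)

lemma ss_three {d D : ℕ} {A : Set (Fin d → ℕ)} (hle : ∀ a ∈ A, ∑ j, a j ≤ D)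
    (i j : Fin d) (hij : i ≠ j) (s : ℕ) (y : Fin d → ℕ)
    (hy : y ∈ sumset A s) (hi : y i = 1) (hj : y j + 1 = s * D)
    (hk : ∀ k, k ≠ i → k ≠ j → y k = 0) :
    Pi.single i 1 + Pi.single j (D - 1) ∈ A := by
  induction s generalizing y with
  | zero => simp at hj
  | succ s ih =>
    obtain ⟨a, ha, b, hb, rfl⟩ := hy
    simp only [Pi.add_apply] at hi hj hk
    have h1 := hle a ha
    have h2 := ss_le hle s b hb
    have h3 := ss_pair a hij
    have h4 := ss_pair b hij
    rw [add_mul, one_mul] at hj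
    by_cases h : a i = 0
    · exact ih b hb (by omega) (by omega) fun k hki hkj => by have := hk k hki hkj; omega
    · convert ha
      ext k
      by_cases hki : k = i
      · subst hki; simp [hij]; omega
      · by_cases hkj : k = j
        · subst hkj; simp [hki]; omega
        · have := hk k hki hkj
          simp [hki, hkj]; omega

theorem stmt_8 (d D : ℕ) (hd : 1 ≤ d) (hD : 2 ≤ D)
    (A : Set (Fin d → ℕ)) (h0 : (0 : Fin d → ℕ) ∈ A)
    (hDeps : ∀ i : Fin d, Pi.single i D ∈ A)
    (hle : ∀ a ∈ A, ∑ j, a j ≤ D) :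
    ((∀ i : Fin d, Pi.single i 1 ∈ A) ∧
      (∀ i : Fin d, Pi.single i (D - 1) ∈ A) ∧
      (∀ i j : Fin d, Pi.single i 1 + Pi.single j (D - 1) ∈ A))
    ↔ (∃ s₀ : ℕ, ∀ s ≥ s₀, sumset A s = {y : Fin d → ℕ | ∑ j, y j ≤ s * D}) := by
  constructor
  · rintro ⟨g1, g2, g3⟩
    refine ⟨Fintype.card (Option (Fin d)) * (Fintype.card (Option (Fin d)) * D), fun s hs => ?_⟩
    ext y
    refine ⟨fun hy => ss_le hle s y hy, fun hy => ?_⟩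
    have hy' : ∑ j, y j ≤ s * D := hy
    have := ss_main A D (by omega) (fun o : Option (Fin d) => o.elim 0 fun i => Pi.single i 1)
      (by
        have hs : ∀ i : Fin d, (D - 1) • (Pi.single i 1 : Fin d → ℕ) = Pi.single i (D - 1) := by
          intro i; rw [← Pi.single_smul]; simp
        rintro (_ | i) (_ | j)
        · simpa using h0
        · simpa [hs] using g2 j
        · simpa using g1 i
        · simpa only [Option.elim, hs] using g3 i j)
      (fun o : Option (Fin d) => o.elim (s * D - ∑ j, y j) y) s hs
      (by simp only [Fintype.sum_option, Option.elim]; omega)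
    convert this using 1
    simp only [Fintype.sum_option, Option.elim, smul_zero, zero_add]
    ext k
    simp [Finset.sum_apply, Pi.single_apply]
  · rintro ⟨s₀, hs₀⟩
    have hs := hs₀ (s₀ + 1) (by omega)
    have hbig : 1 ≤ (s₀ + 1) * D := by nlinarith
    have hmem : ∀ y : Fin d → ℕ, ∑ j, y j ≤ (s₀ + 1) * D → y ∈ sumset A (s₀ + 1) := by
      intro y hy; rw [hs]; exact hy
    refine ⟨fun i => ?_, fun i => ?_, fun i j => ?_⟩
    · exact ss_one i _ (Pi.single i 1) (hmem _ (by simpa using hbig)) (by simp)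
        fun k hk => by simp [hk]
    · exact ss_two hle i _ (Pi.single i ((s₀ + 1) * D - 1)) (hmem _ (by simp))
        (by simp only [Pi.single_eq_same]; omega) fun k hk => by simp [hk]
    · by_cases hij : i = j
      · subst hij
        rw [← Pi.single_add, show 1 + (D - 1) = D by omega]
        exact hDeps i
      · refine ss_three hle i j hij _ (Pi.single i 1 + Pi.single j ((s₀ + 1) * D - 1))
          (hmem _ ?_) ?_ ?_ ?_
        · simp only [Pi.add_apply, Finset.sum_add_distrib, Finset.sum_pi_single',
            Finset.mem_univ, if_true, Fintype.sum_pi_single']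
          omega
        · simp [hij]
        · simp only [Pi.add_apply, Pi.single_eq_same, Pi.single_eq_of_ne (Ne.symm hij)]
          omega
        · intro k hki hkj; simp [hki, hkj]
end

section
/- Let d ≥ 1, D ≥ 3 and e be integers with 1 ≤ e ≤ D and e ∣ D, assume (D−2)(d−1) + D/e ≥ 2, and let A ⊆ ℕ^d be of one-singular-point type for D and e. Set t₀ := (D−2)(d−1) + D/e − 2 and s₀ := (D/e)·t₀. If y belongs to the additive submonoid ⟨A⟩ of ℕ^d generated by A and |y| ≤ t₀·D, then y ∈ s₀·A. -/
open Pointwise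

/-- `ℕ_e^d = {y ∈ ℕ^d : e ∣ |y|}`. -/
def NatE (d e : ℕ) : Set (Fin d → ℕ) := {y | e ∣ ∑ j, y j}

/-- `Δ_{s,e} = {y ∈ ℕ_e^d : |y| ≤ sD}`. -/
def DeltaE (d D e s : ℕ) : Set (Fin d → ℕ) := {y | e ∣ ∑ j, y j ∧ ∑ j, y j ≤ s * D}

/-- The hole set `H = ℕ_e^d \ ⟨A⟩`, where `⟨A⟩` is the additive submonoid generated by `A`. -/
def Holes (d e : ℕ) (A : Set (Fin d → ℕ)) : Set (Fin d → ℕ) :=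
  NatE d e \ (AddSubmonoid.closure A : Set (Fin d → ℕ))

/-- `A ⊆ ℕ^d` is of one-singular-point type for `D` and `e`: every `a ∈ A` satisfies
`|a| ≤ D` and `e ∣ |a|`, and `A` contains `0`, the vectors `(D-1)εᵢ + εⱼ` for all `i, j`,
and the vectors `(D-e)εᵢ` for all `i`. -/
def OneSingType (d D e : ℕ) (A : Set (Fin d → ℕ)) : Prop :=
  (∀ a ∈ A, ∑ j, a j ≤ D ∧ e ∣ ∑ j, a j) ∧
  (0 : Fin d → ℕ) ∈ A ∧
  (∀ i j : Fin d, Pi.single i (D - 1) + Pi.single j 1 ∈ A) ∧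
  (∀ i : Fin d, Pi.single i (D - e) ∈ A)

theorem sumset_add_mem {M : Type*} [AddMonoid M] (A : Set M) (n m : ℕ) (x y : M)
    (hx : x ∈ sumset A n) (hy : y ∈ sumset A m) : x + y ∈ sumset A (n + m) := by
  induction n generalizing x with
  | zero =>
    have hx0 : x = 0 := hx
    subst hx0
    simpa using hy
  | succ n ih =>
    obtain ⟨a, ha, b, hb, rfl⟩ := Set.mem_add.mp hx
    rw [show n + 1 + m = (n + m) + 1 by omega]
    exact Set.mem_add.mpr ⟨a, ha, b + y, ih b hb, (add_assoc _ _ _).symm⟩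

theorem sumset_zero_mem {M : Type*} [AddMonoid M] (A : Set M) (h0 : (0 : M) ∈ A) (n : ℕ) :
    (0 : M) ∈ sumset A n := by
  induction n with
  | zero => exact rfl
  | succ n ih => exact Set.mem_add.mpr ⟨0, h0, 0, ih, add_zero _⟩

theorem stmt_11 (d D e : ℕ) (hd : 1 ≤ d) (hD : 3 ≤ D) (he : 1 ≤ e) (heD : e ≤ D)
    (hdvd : e ∣ D) (ht : 2 ≤ (D - 2) * (d - 1) + D / e)
    (A : Set (Fin d → ℕ)) (hA : OneSingType d D e A)
    (y : Fin d → ℕ) (hy : y ∈ AddSubmonoid.closure A)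
    (hle : ∑ j, y j ≤ ((D - 2) * (d - 1) + D / e - 2) * D) :
    y ∈ sumset A ((D / e) * ((D - 2) * (d - 1) + D / e - 2)) := by
  obtain ⟨hA1, h0, -, -⟩ := hA
  have key : ∃ n, n * e ≤ ∑ j, y j ∧ y ∈ sumset A n := by
    clear hle
    induction hy using AddSubmonoid.closure_induction with
    | mem a ha =>
      by_cases hs : ∑ j, a j = 0
      · refine ⟨0, by simp, ?_⟩
        have : a = 0 := by
          funext j
          exact (Finset.sum_eq_zero_iff.mp hs) j (Finset.mem_univ j)
        exact this
      · refine ⟨1, ?_, Set.mem_add.mpr ⟨a, ha, 0, rfl, add_zero _⟩⟩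
        rw [one_mul]
        exact Nat.le_of_dvd (Nat.pos_of_ne_zero hs) (hA1 a ha).2
    | zero => exact ⟨0, by simp, rfl⟩
    | add x z _ _ hx hz =>
      obtain ⟨n, hn, hxn⟩ := hx
      obtain ⟨m, hm, hzm⟩ := hz
      refine ⟨n + m, ?_, sumset_add_mem A n m x z hxn hzm⟩
      simp only [Pi.add_apply, Finset.sum_add_distrib, add_mul]
      omega
  obtain ⟨n, hn, hyn⟩ := key
  generalize (D - 2) * (d - 1) + D / e - 2 = t at *
  obtain ⟨k, rfl⟩ := hdvd
  rw [Nat.mul_div_cancel_left k (by omega)] at *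
  have hnk : n ≤ k * t := by
    refine Nat.le_of_mul_le_mul_right (?_ : n * e ≤ k * t * e) (by omega)
    calc n * e ≤ _ := hn
      _ ≤ _ := hle
      _ = _ := by ring
  obtain ⟨m, hm⟩ := Nat.exists_eq_add_of_le hnk
  rw [hm]
  simpa using sumset_add_mem A n m y 0 hyn (sumset_zero_mem A h0 m)
end

section
/- Let d ≥ 1, D ≥ 2, e and s be natural numbers with 1 ≤ e ≤ D and e ∣ D. Then Δ_{s,e} + {0, Dε₁, …, Dε_d} = Δ_{s+1,e} (pointwise sum of sets in ℕ^d) if and only if s·D + (e−1) ≥ d·(D−1) (equivalently, s ≥ d − (d+e−1)/D as rational numbers). -/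
open Pointwise

theorem exists_bdd_sum (m : ℕ) : ∀ d n : ℕ, n ≤ d * m →
    ∃ y : Fin d → ℕ, (∀ j, y j ≤ m) ∧ ∑ j, y j = n := by
  intro d
  induction d with
  | zero =>
    intro n hn
    exact ⟨fun _ => 0, by simp, by simp at hn ⊢; omega⟩
  | succ d ih =>
    intro n hn
    rw [Nat.succ_mul] at hn
    obtain ⟨y, hy, hs⟩ := ih (n - min n m) (by
      rcases le_total n m with h | h
      · simp [h]
      · simp only [min_eq_right h]; omega)
    refine ⟨Fin.cons (min n m) y, ?_, ?_⟩
    · intro j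
      refine Fin.cases ?_ ?_ j
      · simp
      · intro k; simpa using hy k
    · rw [Fin.sum_univ_succ]
      simp only [Fin.cons_zero, Fin.cons_succ, hs]
      have := min_le_left n m
      omega

theorem stmt_12 (d D e s : ℕ) (hd : 1 ≤ d) (hD : 2 ≤ D) (he : 1 ≤ e) (heD : e ≤ D)
    (hdvd : e ∣ D) :
    DeltaE d D e s + Erays d D = DeltaE d D e (s + 1) ↔ d * (D - 1) ≤ s * D + (e - 1) := by
  have hsD : e ∣ s * D := hdvd.mul_left s
  constructor
  · intro h
    by_contra hlt
    obtain ⟨y, hy, hs⟩ := exists_bdd_sum (D - 1) d (s * D + e) (by omega)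
    have hm : y ∈ DeltaE d D e (s + 1) := by
      refine ⟨?_, ?_⟩
      · rw [hs]; exact hsD.add (dvd_refl e)
      · rw [hs, Nat.succ_mul]; omega
    rw [← h] at hm
    obtain ⟨a, ha, b, hb, hab⟩ := Set.mem_add.1 hm
    rcases hb with rfl | ⟨i, rfl⟩
    · rw [add_zero] at hab
      subst hab
      have := ha.2
      omega
    · have h1 := congrFun hab i
      simp at h1
      have := hy i
      omega
  · intro h
    ext z
    constructor
    · intro hz
      obtain ⟨a, ha, b, hb, rfl⟩ := Set.mem_add.1 hz
      have h1 := ha.1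
      have h2 := ha.2
      rcases hb with rfl | ⟨i, rfl⟩
      · refine ⟨by simpa using h1, ?_⟩
        rw [add_zero, Nat.succ_mul]; omega
      · have hsum : ∑ j, (a + Pi.single i D : Fin d → ℕ) j = ∑ j, a j + D := by
          simp [Finset.sum_add_distrib]
        refine ⟨?_, ?_⟩
        · exact hsum ▸ h1.add hdvd
        · rw [Nat.succ_mul]; exact hsum.le.trans (by omega)
    · rintro ⟨h1, h2⟩
      rw [Nat.succ_mul] at h2
      by_cases hle : ∑ j, z j ≤ s * D
      · exact Set.mem_add.2 ⟨z, ⟨h1, hle⟩, 0, Or.inl rfl, add_zero z⟩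
      · have h3 : e ≤ ∑ j, z j - s * D :=
          Nat.le_of_dvd (by omega) (Nat.dvd_sub h1 hsD)
        have h4 : ∃ i, D ≤ z i := by
          by_contra! hc
          have : ∑ j, z j ≤ ∑ _j : Fin d, (D - 1) :=
            Finset.sum_le_sum fun j _ => by have := hc j; omega
          simp at this
          omega
        obtain ⟨i, hi⟩ := h4
        have hz : (z - Pi.single i D) + Pi.single i D = z := by
          funext j
          by_cases hj : j = i
          · subst hj; simp [hi]
          · simp [hj]
        have hsum : ∑ j, (z - Pi.single i D : Fin d → ℕ) j + D = ∑ j, z j := by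
          conv_rhs => rw [← hz]
          simp [Finset.sum_add_distrib]
        refine Set.mem_add.2 ⟨z - Pi.single i D, ⟨?_, ?_⟩, Pi.single i D, Or.inr ⟨i, rfl⟩, hz⟩
        · rw [← hsum] at h1
          exact (Nat.dvd_add_left hdvd).1 h1
        · omega
end

section
/- Let d ≥ 2, D ≥ 3 and e be integers with 1 ≤ e < D and e ∣ D, and let A ⊆ ℕ^d be of one-singular-point type for D and e. Then the set {s ∈ ℕ : H ⊆ Δ_{s,e}, and s′A = Δ_{s′,e} \ H for every s′ ≥ s, and Δ_{s,e} + {0, Dε₁, …, Dε_d} = Δ_{s+1,e}} is nonempty, and its least element σ(A) satisfies σ(A)·D + (e−1) ≥ d·(D−1) and σ(A) ≤ (D/e)·((d−1)(D−2) + D/e − 2). -/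
open Pointwise

theorem sumset_mono_aux {d : ℕ} {A : Set (Fin d → ℕ)} (h0 : (0 : Fin d → ℕ) ∈ A) {m n : ℕ}
    (h : m ≤ n) : sumset A m ⊆ sumset A n := by
  induction n, h using Nat.le_induction with
  | base => exact subset_rfl
  | succ n hn ih =>
    intro y hy
    exact Set.mem_add.2 ⟨0, h0, y, ih hy, zero_add y⟩

theorem sumset_add_aux {d : ℕ} {A : Set (Fin d → ℕ)} {m n : ℕ} {x y : Fin d → ℕ}
    (hx : x ∈ sumset A m) (hy : y ∈ sumset A n) : x + y ∈ sumset A (m + n) := by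
  induction m generalizing x with
  | zero =>
    have : x = 0 := hx
    subst this
    simpa using hy
  | succ m ih =>
    obtain ⟨a, ha, b, hb, rfl⟩ := Set.mem_add.1 hx
    rw [Nat.succ_add_eq_add_succ, Nat.add_succ]
    exact Set.mem_add.2 ⟨a, ha, b + y, ih hb, (add_assoc _ _ _).symm⟩

theorem sumset_bound_aux {d D e : ℕ} {A : Set (Fin d → ℕ)}
    (hA : ∀ a ∈ A, ∑ j, a j ≤ D ∧ e ∣ ∑ j, a j) {s : ℕ} {y : Fin d → ℕ}
    (hy : y ∈ sumset A s) : y ∈ DeltaE d D e s ∧ y ∈ AddSubmonoid.closure A := by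
  induction s generalizing y with
  | zero =>
    have : y = 0 := hy
    subst this
    exact ⟨by simp [DeltaE], zero_mem _⟩
  | succ m ih =>
    obtain ⟨a, ha, b, hb, rfl⟩ := Set.mem_add.1 hy
    obtain ⟨⟨h1, h2⟩, h3⟩ := ih hb
    obtain ⟨h4, h5⟩ := hA a ha
    refine ⟨⟨?_, ?_⟩, add_mem (AddSubmonoid.subset_closure ha) h3⟩
    · simp only [Pi.add_apply, Finset.sum_add_distrib]
      exact dvd_add h5 h1
    · simp only [Pi.add_apply, Finset.sum_add_distrib]
      nlinarith

theorem closure_sumset_aux {d D e : ℕ} {A : Set (Fin d → ℕ)}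
    (hA : ∀ a ∈ A, ∑ j, a j ≤ D ∧ e ∣ ∑ j, a j) {y : Fin d → ℕ}
    (hy : y ∈ AddSubmonoid.closure A) : ∃ n, e * n ≤ ∑ j, y j ∧ y ∈ sumset A n := by
  induction hy using AddSubmonoid.closure_induction with
  | mem a ha =>
    by_cases h : ∑ j, a j = 0
    · refine ⟨0, by simp, ?_⟩
      have : a = 0 := by
        funext i
        exact (Finset.sum_eq_zero_iff.1 h) i (Finset.mem_univ i)
      exact this
    · refine ⟨1, ?_, ?_⟩
      · simpa using Nat.le_of_dvd (Nat.pos_of_ne_zero h) (hA a ha).2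
      · exact Set.mem_add.2 ⟨a, ha, 0, rfl, add_zero a⟩
  | zero => exact ⟨0, by simp, rfl⟩
  | add x y _ _ hx hy =>
    obtain ⟨m, hm, hx⟩ := hx
    obtain ⟨n, hn, hy⟩ := hy
    refine ⟨m + n, ?_, sumset_add_aux hx hy⟩
    simp only [Pi.add_apply, Finset.sum_add_distrib]
    nlinarith

theorem exists_large_aux {d q : ℕ} (hq : 1 ≤ q) (z : Fin d → ℕ) (h : d * (q - 1) < ∑ j, z j) :
    ∃ i, q ≤ z i := by
  by_contra! hc
  have : ∑ j, z j ≤ ∑ _j : Fin d, (q - 1) := Finset.sum_le_sum fun i _ => by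
    have := hc i
    omega
  simp at this
  omega

theorem floor_aux {d q : ℕ} (hq : 1 ≤ q) (y : Fin d → ℕ) (n : ℕ)
    (h : n * q + d * (q - 1) < ∑ j, y j + q) :
    ∃ c : Fin d → ℕ, ∑ j, c j = n ∧ ∀ i, c i * q ≤ y i := by
  induction n with
  | zero => exact ⟨0, by simp, by simp⟩
  | succ n ih =>
    have h' : n * q + d * (q - 1) < ∑ j, y j := by nlinarith
    obtain ⟨c, hc, hcy⟩ := ih (by omega)
    obtain ⟨i, hi⟩ := exists_large_aux hq (fun j => y j - c j * q) (by
      have : ∑ j, (y j - c j * q) + ∑ j, c j * q = ∑ j, y j := by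
        rw [← Finset.sum_add_distrib]
        exact Finset.sum_congr rfl fun j _ => Nat.sub_add_cancel (hcy j)
      rw [← Finset.sum_mul, hc] at this
      omega)
    refine ⟨c + Pi.single i 1, by simp [Finset.sum_add_distrib, hc], fun j => ?_⟩
    by_cases hj : j = i
    · subst hj
      have := hcy j
      simp only [Pi.add_apply, Pi.single_eq_same, add_mul, one_mul]
      omega
    · simpa [hj] using hcy j

theorem exists_pred_aux {d n : ℕ} (c : Fin d → ℕ) (h : ∑ j, c j = n + 1) :
    ∃ i, ∃ c' : Fin d → ℕ, ∑ j, c' j = n ∧ c = Pi.single i 1 + c' := by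
  obtain ⟨i, hi⟩ := exists_large_aux (q := 1) le_rfl c (by simp [h])
  have hc : c = Pi.single i 1 + (c - Pi.single i 1) := by
    funext j
    by_cases hj : j = i
    · subst hj; simp; omega
    · simp [hj]
  refine ⟨i, c - Pi.single i 1, ?_, hc⟩
  rw [hc] at h
  simp only [Pi.add_apply, Finset.sum_add_distrib, Finset.sum_pi_single', Finset.mem_univ,
    if_true] at h
  simp at h ⊢
  omega

theorem build_aux {d q r : ℕ} {A : Set (Fin d → ℕ)}
    (hA : ∀ i j : Fin d, (Pi.single i q + Pi.single j r : Fin d → ℕ) ∈ A) (n : ℕ)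
    (c w : Fin d → ℕ) (hc : ∑ j, c j = n) (hw : ∑ j, w j = n) :
    (fun i => c i * q + w i * r) ∈ sumset A n := by
  induction n generalizing c w with
  | zero =>
    have h1 : c = 0 := funext fun i => (Finset.sum_eq_zero_iff.1 hc) i (Finset.mem_univ i)
    have h2 : w = 0 := funext fun i => (Finset.sum_eq_zero_iff.1 hw) i (Finset.mem_univ i)
    subst h1 h2
    change _ = _
    funext i
    simp
  | succ n ih =>
    obtain ⟨i, c', hc', rfl⟩ := exists_pred_aux c hc
    obtain ⟨j, w', hw', rfl⟩ := exists_pred_aux w hw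
    refine Set.mem_add.2 ⟨_, hA i j, _, ih c' w' hc' hw', ?_⟩
    funext k
    simp only [Pi.add_apply, Pi.single_apply]
    split_ifs <;> ring

theorem full_aux {d D : ℕ} (hd : 2 ≤ d) (hD : 3 ≤ D) {A : Set (Fin d → ℕ)}
    (hA : ∀ i j : Fin d, (Pi.single i (D - 1) + Pi.single j 1 : Fin d → ℕ) ∈ A) (n : ℕ)
    (y : Fin d → ℕ) (hy : ∑ j, y j = n * D) (hn : (d - 1) * (D - 2) ≤ n) : y ∈ sumset A n := by
  obtain ⟨k, hk, hky⟩ := floor_aux (q := D - 1) (by omega) y n (by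
    rw [hy]
    obtain ⟨f, rfl⟩ := Nat.exists_eq_add_of_le hd
    obtain ⟨g, rfl⟩ := Nat.exists_eq_add_of_le hD
    have e1 : 2 + f - 1 = f + 1 := by omega
    have e2 : 3 + g - 2 = g + 1 := by omega
    have e3 : 3 + g - 1 = g + 2 := by omega
    have e4 : g + 2 - 1 = g + 1 := by omega
    rw [e1, e2] at hn
    rw [e3, e4]
    nlinarith)
  have hs : ∑ j, (y j - k j * (D - 1)) = n := by
    have : ∑ j, (y j - k j * (D - 1)) + ∑ j, k j * (D - 1) = ∑ j, y j := by
      rw [← Finset.sum_add_distrib]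
      exact Finset.sum_congr rfl fun j _ => Nat.sub_add_cancel (hky j)
    rw [← Finset.sum_mul, hk, hy] at this
    have h2 : n * D = n * (D - 1) + n := by
      obtain ⟨g, rfl⟩ := Nat.exists_eq_add_of_le hD
      have e3 : 3 + g - 1 = g + 2 := by omega
      rw [e3]; ring
    omega
  have := build_aux hA n k _ hk hs
  convert this using 1
  funext i
  have := hky i
  simp only [mul_one]
  omega

/-- every large enough point with `|y| ≤ sD` is in `sA` -/
theorem key_aux {d D e m : ℕ} (hd : 2 ≤ d) (hD : 3 ≤ D) (he : 1 ≤ e) (hm : 2 ≤ m)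
    (hDm : D = e * m) {A : Set (Fin d → ℕ)} (hA : OneSingType d D e A) (s : ℕ)
    (y : Fin d → ℕ) (hdv : e ∣ ∑ j, y j) (hs : ∑ j, y j ≤ s * D)
    (hl : D * ((d - 1) * (D - 2) + m - 2) < ∑ j, y j) : y ∈ sumset A s := by
  obtain ⟨hA1, h0, hA2, hA3⟩ := hA
  obtain ⟨u, hu⟩ := hdv
  -- t = ceil (u / m)
  obtain ⟨t, c, hc, ht⟩ : ∃ t c, c < m ∧ u + c = t * m := by
    refine ⟨(u + (m - 1)) / m, (m - 1) - (u + (m - 1)) % m, by omega, ?_⟩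
    have h1 := Nat.div_add_mod' (u + (m - 1)) m
    have h2 := Nat.mod_lt (u + (m - 1)) (show 0 < m by omega)
    omega
  have hyt : ∑ j, y j + c * e = t * D := by
    rw [hu, hDm]; linear_combination e * ht
  have hts : t ≤ s := by
    rw [hu, hDm] at hs
    have : u ≤ s * m := by
      have : e * u ≤ e * (s * m) := by linarith
      exact Nat.le_of_mul_le_mul_left this he
    by_contra! hcon
    have : (s + 1) * m ≤ t * m := Nat.mul_le_mul_right _ hcon
    nlinarith
  refine sumset_mono_aux h0 hts ?_
  set K := (d - 1) * (D - 2) with hK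
  have hKt : K + m - 2 < t := by
    have : D * (K + m - 2) < D * t := by nlinarith
    exact Nat.lt_of_mul_lt_mul_left this
  have hct : c ≤ t := by omega
  have hq : 1 ≤ D - e := by
    have : e * 2 ≤ e * m := Nat.mul_le_mul_left _ hm
    omega
  have heD : D - e + e = D := by omega
  have hlow : d * (D - e - 1) ≤ D * K := by
    have h1 : d * (D - e - 1) ≤ d * (D - 2) := Nat.mul_le_mul_left _ (by omega)
    have h2 : d ≤ D * (d - 1) := by
      have : 3 * (d - 1) ≤ D * (d - 1) := Nat.mul_le_mul_right _ hD
      omega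
    have h3 : d * (D - 2) ≤ D * (d - 1) * (D - 2) := Nat.mul_le_mul_right _ h2
    rw [hK, ← mul_assoc]
    omega
  obtain ⟨k, hk, hky⟩ := floor_aux (q := D - e) hq y c (by
    have h1 : D * (K + m - 2) = D * K + D * (m - 2) := by
      rw [← mul_add]; congr 1; omega
    have h2 : c * (D - e) ≤ (m - 2) * (D - e) + (D - e) := by
      have : c * (D - e) ≤ (m - 2 + 1) * (D - e) := Nat.mul_le_mul_right _ (by omega)
      linarith
    have h3 : (m - 2) * (D - e) ≤ (m - 2) * D := Nat.mul_le_mul_left _ (by omega)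
    have h4 : (m - 2) * D = D * (m - 2) := mul_comm _ _
    omega)
  have hsum : ∑ j, (y j - k j * (D - e)) = (t - c) * D := by
    have : ∑ j, (y j - k j * (D - e)) + ∑ j, k j * (D - e) = ∑ j, y j := by
      rw [← Finset.sum_add_distrib]
      exact Finset.sum_congr rfl fun j _ => Nat.sub_add_cancel (hky j)
    rw [← Finset.sum_mul, hk] at this
    obtain ⟨r, rfl⟩ := Nat.exists_eq_add_of_le hct
    have e1 : c + r - c = r := by omega
    rw [e1]
    have : c * (D - e) + c * e = c * D := by rw [← mul_add, heD]
    have : (c + r) * D = c * D + r * D := by ring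
    omega
  have h1 := full_aux hd hD hA2 (t - c) _ hsum (by omega)
  have h2 := build_aux (q := D - e) (r := 0) (A := A) (fun i j => by simpa using hA3 i) c k k hk hk
  have h3 := sumset_add_aux h1 h2
  rw [Nat.sub_add_cancel hct] at h3
  convert h3 using 1
  funext i
  have := hky i
  simp only [Pi.add_apply]
  omega

theorem exists_sum_aux {d q : ℕ} (n : ℕ) (h : n ≤ d * q) :
    ∃ y : Fin d → ℕ, ∑ j, y j = n ∧ ∀ i, y i ≤ q := by
  induction n with
  | zero => exact ⟨0, by simp, by simp⟩
  | succ n ih =>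
    obtain ⟨y, hy, hyq⟩ := ih (by omega)
    obtain ⟨i, hi⟩ : ∃ i, y i < q := by
      by_contra! hc
      have : ∑ _j : Fin d, q ≤ ∑ j, y j := Finset.sum_le_sum fun i _ => hc i
      simp at this
      omega
    refine ⟨y + Pi.single i 1, by simp [Finset.sum_add_distrib, hy], fun j => ?_⟩
    by_cases hj : j = i
    · subst hj; simpa using hi
    · simpa [hj] using hyq j

theorem lower_aux {d D e s : ℕ} (hD : 3 ≤ D) (he : 1 ≤ e) (hdvd : e ∣ D) (heD : e < D)
    (h : DeltaE d D e s + Erays d D = DeltaE d D e (s + 1)) :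
    d * (D - 1) ≤ s * D + (e - 1) := by
  by_contra! hc
  obtain ⟨y, hy, hyq⟩ := exists_sum_aux (d := d) (q := D - 1) (s * D + e) (by omega)
  have hmem : y ∈ DeltaE d D e (s + 1) := by
    refine ⟨?_, ?_⟩
    · rw [hy]; exact dvd_add (Dvd.dvd.mul_left hdvd s) dvd_rfl
    · rw [hy]; nlinarith
  rw [← h] at hmem
  obtain ⟨z, hz, w, hw, rfl⟩ := Set.mem_add.1 hmem
  rcases hw with rfl | ⟨i, rfl⟩
  · have := hz.2
    simp at hy
    omega
  · have := hyq i
    simp at this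
    omega

theorem delta_aux {d D e s : ℕ} (hD : 3 ≤ D) (hdvd : e ∣ D)
    (h : d * (D - 1) ≤ s * D + (e - 1)) (he : 1 ≤ e) :
    DeltaE d D e s + Erays d D = DeltaE d D e (s + 1) := by
  apply Set.Subset.antisymm
  · rintro y hy
    obtain ⟨z, hz, w, hw, rfl⟩ := Set.mem_add.1 hy
    obtain ⟨h1, h2⟩ := hz
    rcases hw with rfl | ⟨i, rfl⟩
    · refine ⟨by simpa using h1, ?_⟩
      simp only [add_zero]
      nlinarith
    · refine ⟨?_, ?_⟩
      · simpa [Finset.sum_add_distrib] using dvd_add h1 hdvd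
      · simp [Finset.sum_add_distrib]
        nlinarith
  · rintro y ⟨h1, h2⟩
    by_cases hy : ∑ j, y j ≤ s * D
    · exact Set.mem_add.2 ⟨y, ⟨h1, hy⟩, 0, Set.mem_insert _ _, add_zero y⟩
    · have h3 : s * D + e ≤ ∑ j, y j := by
        have h4 : e ∣ s * D := Dvd.dvd.mul_left hdvd s
        have h5 := Nat.le_of_dvd (by omega) (Nat.dvd_sub h1 h4)
        omega
      obtain ⟨i, hi⟩ := exists_large_aux (q := D) (by omega) y (by omega)
      have hyy : y - Pi.single i D + Pi.single i D = y := by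
        funext j
        by_cases hj : j = i
        · subst hj; simp; omega
        · simp [hj]
      refine Set.mem_add.2 ⟨y - Pi.single i D, ?_, Pi.single i D,
        Set.mem_insert_of_mem _ ⟨i, rfl⟩, hyy⟩
      have hsum : ∑ j, (y - (Pi.single i D : Fin d → ℕ)) j + D = ∑ j, y j := by
        conv_rhs => rw [← hyy]
        rw [Finset.sum_congr rfl fun j _ =>
          Pi.add_apply (y - (Pi.single i D : Fin d → ℕ)) (Pi.single i D) j, Finset.sum_add_distrib]
        simp
      refine ⟨?_, ?_⟩
      · rw [← hsum] at h1
        exact (Nat.dvd_add_left hdvd).1 h1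
      · have : (s + 1) * D = s * D + D := by ring
        omega

theorem stmt_13 (d D e : ℕ) (hd : 2 ≤ d) (hD : 3 ≤ D) (he : 1 ≤ e) (heD : e < D)
    (hdvd : e ∣ D)
    (A : Set (Fin d → ℕ)) (hA : OneSingType d D e A) :
    ∃ σ : ℕ,
      IsLeast {s : ℕ | Holes d e A ⊆ DeltaE d D e s ∧
          (∀ s' ≥ s, sumset A s' = DeltaE d D e s' \ Holes d e A) ∧
          DeltaE d D e s + Erays d D = DeltaE d D e (s + 1)} σ ∧
      d * (D - 1) ≤ σ * D + (e - 1) ∧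
      σ ≤ (D / e) * ((d - 1) * (D - 2) + D / e - 2) := by
  set S := {s : ℕ | Holes d e A ⊆ DeltaE d D e s ∧
          (∀ s' ≥ s, sumset A s' = DeltaE d D e s' \ Holes d e A) ∧
          DeltaE d D e s + Erays d D = DeltaE d D e (s + 1)} with hS
  set m := D / e with hm
  have hDm : D = e * m := (Nat.mul_div_cancel' hdvd).symm
  have hm2 : 2 ≤ m := by
    by_contra! hc
    have : e * m ≤ e * 1 := Nat.mul_le_mul_left _ (by omega)
    omega
  set K := (d - 1) * (D - 2) + m - 2 with hK
  have hB : m * K ∈ S := by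
    have heB : e * (m * K) = D * K := by rw [← mul_assoc, ← hDm]
    refine ⟨?_, ?_, ?_⟩
    · rintro y ⟨hy1, hy2⟩
      refine ⟨hy1, ?_⟩
      by_contra! hc
      apply hy2
      refine (sumset_bound_aux hA.1 (key_aux hd hD he hm2 hDm hA (∑ j, y j) y hy1 ?_ ?_)).2
      · exact Nat.le_mul_of_pos_right _ (by omega)
      · calc D * K = 1 * (K * D) := by ring
          _ ≤ m * (K * D) := Nat.mul_le_mul_right _ (by omega)
          _ = m * K * D := by ring
          _ < _ := hc
    · intro s hs
      apply Set.Subset.antisymm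
      · intro y hy
        obtain ⟨h1, h2⟩ := sumset_bound_aux hA.1 hy
        exact ⟨h1, fun h => h.2 h2⟩
      · rintro y ⟨⟨h1, h2⟩, h3⟩
        have hcl : y ∈ AddSubmonoid.closure A := by
          by_contra hc
          exact h3 ⟨h1, hc⟩
        by_cases hl : D * K < ∑ j, y j
        · exact key_aux hd hD he hm2 hDm hA s y h1 h2 hl
        · obtain ⟨n, hn, hyn⟩ := closure_sumset_aux hA.1 hcl
          refine sumset_mono_aux hA.2.1 ?_ hyn
          have : e * n ≤ e * (m * K) := by omega
          exact (Nat.le_of_mul_le_mul_left this he).trans hs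
    · refine delta_aux hD hdvd ?_ he
      have h1 : 2 * ((d - 1) * (D - 2)) ≤ m * K := Nat.mul_le_mul hm2 (by omega)
      have h2 : d * (D - 2) ≤ m * K := by
        have : d * (D - 2) ≤ 2 * (d - 1) * (D - 2) := Nat.mul_le_mul_right _ (by omega)
        rw [mul_assoc] at this
        omega
      have h3 : D - 1 ≤ (D - 2) * D := by
        have : 1 * D ≤ (D - 2) * D := Nat.mul_le_mul_right _ (by omega)
        omega
      have h4 : d * (D - 1) ≤ d * ((D - 2) * D) := Nat.mul_le_mul_left _ h3
      have h5 : d * (D - 2) * D ≤ m * K * D := Nat.mul_le_mul_right _ h2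
      rw [mul_assoc] at h5
      omega
  have hne : S.Nonempty := ⟨_, hB⟩
  refine ⟨sInf S, ⟨Nat.sInf_mem hne, fun x hx => Nat.sInf_le hx⟩, ?_, Nat.sInf_le hB⟩
  exact lower_aux hD he hdvd heD (Nat.sInf_mem hne).2.2
end

section
/- Let d ≥ 1, D ≥ 1 and e be integers with 1 ≤ e ≤ D and e ∣ D. Let A ⊆ ℕ^{d+1} (coordinates indexed by 0, 1, …, d, with standard basis vectors ε₀, ε₁, …, ε_d) be a finite set such that every a ∈ A satisfies a₀ + a₁ + ⋯ + a_d = D and e ∣ a₀, and such that (D−1)εᵢ + ε_j ∈ A for all 1 ≤ i, j ≤ d and e·ε₀ + (D−e)·ε_j ∈ A for all 1 ≤ j ≤ d. Then the greatest common divisor of the determinants of all (d+1)×(d+1) integer matrices whose columns are elements of A equals D·e. -/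
theorem stmt_15 (d D e : ℕ) (hd : 1 ≤ d) (hD : 1 ≤ D) (he : 1 ≤ e) (heD : e ≤ D)
    (hdvd : e ∣ D)
    (A : Set (Fin (d + 1) → ℕ)) (hfin : A.Finite)
    (hsum : ∀ a ∈ A, ∑ j, a j = D)
    (hdvd0 : ∀ a ∈ A, e ∣ a 0)
    (h1 : ∀ i j : Fin d, Pi.single (i.succ : Fin (d + 1)) (D - 1) +
      Pi.single (j.succ : Fin (d + 1)) 1 ∈ A)
    (h2 : ∀ j : Fin d, Pi.single (0 : Fin (d + 1)) e +
      Pi.single (j.succ : Fin (d + 1)) (D - e) ∈ A) :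
    (∀ M : Matrix (Fin (d + 1)) (Fin (d + 1)) ℤ,
        (∀ j, ∃ a ∈ A, ∀ i, M i j = (a i : ℤ)) → ((D * e : ℕ) : ℤ) ∣ M.det) ∧
    (∀ g : ℤ, (∀ M : Matrix (Fin (d + 1)) (Fin (d + 1)) ℤ,
        (∀ j, ∃ a ∈ A, ∀ i, M i j = (a i : ℤ)) → g ∣ M.det) → g ∣ ((D * e : ℕ) : ℤ)) := by
  obtain ⟨n, rfl⟩ : ∃ n, d = n + 1 := ⟨d - 1, by omega⟩
  constructor
  · intro M hM
    have hs : (M.updateRow 1 (∑ k, (1 : ℤ) • M k)).det = (1 : ℤ) • M.det :=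
      Matrix.det_updateRow_sum M 1 (fun _ => (1 : ℤ))
    have hrow : (∑ k, (1 : ℤ) • M k) = (D : ℤ) • (fun _ => (1 : ℤ)) := by
      funext j
      obtain ⟨a, ha, hj⟩ := hM j
      have := hsum a ha
      simp only [one_smul, Pi.smul_apply, smul_eq_mul, mul_one]
      refine (Finset.sum_apply j Finset.univ (fun k => M k)).trans ?_
      rw [Finset.sum_congr rfl (fun i _ => hj i)]
      exact_mod_cast this
    rw [hrow, Matrix.det_updateRow_smul, one_smul] at hs
    rw [← hs, Nat.cast_mul]
    apply mul_dvd_mul_left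
    rw [Matrix.det_succ_row_zero]
    apply Finset.dvd_sum
    intro j _
    apply Dvd.dvd.mul_right
    apply Dvd.dvd.mul_left
    rw [Matrix.updateRow_ne (by simp)]
    obtain ⟨a, ha, hj⟩ := hM j
    rw [hj]
    exact_mod_cast hdvd0 a ha
  · intro g hg
    let c : Fin (n + 1 + 1) → Fin (n + 1 + 1) → ℕ := Fin.cons
      (Pi.single (0 : Fin (n + 1 + 1)) e + Pi.single ((0 : Fin (n + 1)).succ) (D - e))
      (fun j : Fin (n + 1) => Pi.single ((0 : Fin (n + 1)).succ) (D - 1) + Pi.single j.succ 1)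
    let M : Matrix (Fin (n + 1 + 1)) (Fin (n + 1 + 1)) ℤ := Matrix.of fun i j => (c j i : ℤ)
    have hdet : M.det = ((D * e : ℕ) : ℤ) := by
      rw [Matrix.det_succ_row_zero, Fin.sum_univ_succ]
      have h0 : ∀ j : Fin (n + 1), M 0 j.succ = 0 := by
        intro j
        simp [M, c, Pi.single_apply]
      have h00 : M 0 0 = e := by
        simp [M, c, Pi.single_apply]
      have hsub : (M.submatrix Fin.succ (Fin.succAbove 0)).det = D := by
        rw [Matrix.det_of_upperTriangular, Fin.prod_univ_succ]
        · have : ∀ i : Fin n, M i.succ.succ i.succ.succ = 1 := by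
            intro i
            simp [M, c, Pi.single_apply]
            intro h
            exact absurd (Fin.succ_injective _ h) (Fin.succ_ne_zero i)
          have h11 : M (Fin.succ 0) (Fin.succ 0) = D := by
            simp only [M, c, Matrix.of_apply, Fin.cons_succ, Pi.add_apply, Pi.single_eq_same]
            congr 1
            omega
          simp only [Matrix.submatrix_apply, Fin.succAbove_zero, this, h11]
          simp
        · intro i j hij
          have hij : j < i := hij
          have hi : i ≠ 0 := by rintro rfl; exact absurd hij (Fin.not_lt_zero j)
          have hne : i ≠ j := hij.ne'
          have e1 : i.succ ≠ (0 : Fin (n+1)).succ := fun h => hi (Fin.succ_injective _ h)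
          have e2 : i.succ ≠ j.succ := fun h => hne (Fin.succ_injective _ h)
          simp only [M, c, Matrix.submatrix_apply, Fin.succAbove_zero, Matrix.of_apply,
            Fin.cons_succ, Pi.add_apply, Pi.single_eq_of_ne e1, Pi.single_eq_of_ne e2]
          simp
      simp only [h0, h00, hsub]
      simp [mul_comm]
    rw [← hdet]
    apply hg
    intro j
    refine ⟨c j, ?_, fun i => rfl⟩
    refine Fin.cases ?_ (fun j => ?_) j
    · exact h2 0
    · exact h1 0 j
end

section
/- Let d ≥ 1, D and e be integers with 1 ≤ e < D and e ∣ D, and let A ⊆ ℕ^d be a finite set such that every y ∈ A satisfies |y| ≤ D and e ∣ |y|. Then e·|A| ≤ C(D+d, d) + (e−1)·C(D+d−1, d−1), where |A| is the cardinality of A; equivalently, |A| ≤ ((D/e) + d)/(D + d) · C(D+d, d). -/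
theorem aux_block (k n j : ℕ) :
    (n + k + 1).choose (k + 1) + j * (n + k).choose k ≤ (n + j + k + 1).choose (k + 1) := by
  induction j with
  | zero => simp
  | succ j ih =>
    have h1 : (n + (j + 1) + k + 1).choose (k + 1)
        = (n + j + k + 1).choose k + (n + j + k + 1).choose (k + 1) := by
      rw [← Nat.choose_succ_succ]; congr 1; omega
    have h2 : (n + k).choose k ≤ (n + j + k + 1).choose k := Nat.choose_le_choose k (by omega)
    rw [h1, add_mul]; omega

theorem aux_sum (k e m : ℕ) (he : 1 ≤ e) :
    e * ∑ i ∈ Finset.range (m + 1), (e * i + k).choose k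
      ≤ (e * m + k + 1).choose (k + 1) + (e - 1) * (e * m + k).choose k := by
  obtain ⟨c, rfl⟩ : ∃ c, e = c + 1 := ⟨e - 1, by omega⟩
  induction m with
  | zero => simp
  | succ m ih =>
    rw [Finset.sum_range_succ, mul_add]
    have h0 := aux_block k ((c + 1) * m) c
    have h1 : ((c + 1) * (m + 1) + k + 1).choose (k + 1)
        = ((c + 1) * (m + 1) + k).choose k + ((c + 1) * m + c + k + 1).choose (k + 1) := by
      rw [Nat.choose_succ_succ]
      congr 2; ring
    simp only [Nat.add_sub_cancel] at ih ⊢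
    rw [h1, add_mul c 1 (((c + 1) * (m + 1) + k).choose k)]
    omega

theorem aux_card (k n : ℕ) :
    (Finset.piAntidiag (Finset.univ : Finset (Fin (k + 1))) n).card = (n + k).choose k := by
  have h : (Finset.piAntidiag (Finset.univ : Finset (Fin (k + 1))) n).card
      = (Finset.finsuppAntidiag (Finset.univ : Finset (Fin (k + 1))) n).card := by
    refine Finset.card_nbij' (fun f => Finsupp.equivFunOnFinite.symm f) (fun f => ⇑f) ?_ ?_ ?_ ?_
    · intro f hf
      simpa [Finset.mem_finsuppAntidiag] using hf
    · intro f hf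
      simpa [Finset.mem_finsuppAntidiag] using hf
    · intro f hf
      rfl
    · intro f hf
      ext; rfl
  rw [h, Finset.card_finsuppAntidiag_nat_eq_choose, Finset.card_univ, Fintype.card_fin,
    ← Nat.choose_symm_add]
  congr 1; omega

theorem stmt_16 (d D e : ℕ) (hd : 1 ≤ d) (he : 1 ≤ e) (heD : e < D) (hdvd : e ∣ D)
    (A : Finset (Fin d → ℕ))
    (hA : ∀ y ∈ A, ∑ j, y j ≤ D ∧ e ∣ ∑ j, y j) :
    e * A.card ≤ Nat.choose (D + d) d + (e - 1) * Nat.choose (D + d - 1) (d - 1) := by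
  obtain ⟨k, rfl⟩ : ∃ k, d = k + 1 := ⟨d - 1, by omega⟩
  obtain ⟨m, rfl⟩ := hdvd
  have hsub : A ⊆ (Finset.range (m + 1)).biUnion
      (fun i => Finset.piAntidiag (Finset.univ : Finset (Fin (k + 1))) (e * i)) := by
    intro y hy
    obtain ⟨h1, i, hi⟩ := hA y hy
    simp only [Finset.mem_biUnion, Finset.mem_range, Finset.mem_piAntidiag]
    refine ⟨i, ?_, hi, by simp⟩
    rw [hi] at h1
    have := Nat.le_of_mul_le_mul_left h1 (by omega)
    omega
  have hc := (Finset.card_le_card hsub).trans Finset.card_biUnion_le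
  simp only [aux_card] at hc
  exact (Nat.mul_le_mul_left e hc).trans (aux_sum k e m he)
end

section
/- Let d ≥ 3, D ≥ 3 and e be integers with 1 ≤ e < D and e ∣ D. Then, as an inequality of rational numbers, (D/e)·((d−1)(D−2) + D/e − 2) ≤ D^d/e − ((D/e + d)/(D + d))·C(D+d, d) + d. -/
theorem base_aux (e m : ℕ) (he : 1 ≤ e) (hm : 2 ≤ m) (hD : 3 ≤ e * m) :
    ((e:ℚ) * m)^3 ≥ (e*m) * (e*m+1) * (e*m+2) / 6 + e * ((e*m+2) * (e*m+1) / 2 - 3)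
      + ((e:ℚ) * m) * (2 * (e * m - 2) + m - 2) := by
  rcases Nat.lt_or_ge e 2 with h | h
  · obtain rfl : e = 1 := by omega
    obtain ⟨k, rfl⟩ := Nat.exists_eq_add_of_le (show 3 ≤ m by omega)
    rw [ge_iff_le, ← sub_nonneg]
    push_cast
    ring_nf
    positivity
  · obtain ⟨k, rfl⟩ := Nat.exists_eq_add_of_le hm
    obtain ⟨j, rfl⟩ := Nat.exists_eq_add_of_le h
    rw [ge_iff_le, ← sub_nonneg]
    push_cast
    ring_nf
    positivity

theorem a_rec (n k : ℕ) : ((n:ℚ)+k+4) * ((n+k+3).choose (k+3) : ℚ)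
    = ((n+(k+1)+3).choose (k+1+3) : ℚ) * (k+4) := by
  have := Nat.add_one_mul_choose_eq (n+k+3) (k+3)
  rw [show n+(k+1)+3 = n+k+3+1 by ring, show k+1+3 = k+3+1 by ring]
  have h : (((n+k+3+1) * (n+k+3).choose (k+3) : ℕ):ℚ) = _ := congrArg _ this
  push_cast at h
  linarith

theorem b_rec (n k : ℕ) : ((n:ℚ)+k+4) * ((n+k+3).choose (k+2) : ℚ)
    = ((n+(k+1)+3).choose (k+1+2) : ℚ) * (k+3) := by
  have := Nat.add_one_mul_choose_eq (n+k+3) (k+2)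
  rw [show n+(k+1)+3 = n+k+3+1 by ring, show k+1+2 = k+2+1 by ring]
  have h : (((n+k+3+1) * (n+k+3).choose (k+2) : ℕ):ℚ) = _ := congrArg _ this
  push_cast at h
  linarith

theorem b_zero (n : ℕ) : (((n+3).choose 2 : ℕ) : ℚ) = (n+3)*(n+2)/2 := by
  rw [Nat.cast_choose_two]; push_cast; ring

theorem a_zero (n : ℕ) : (((n+3).choose 3 : ℕ) : ℚ) = (n+1)*(n+2)*(n+3)/6 := by
  have := Nat.add_one_mul_choose_eq (n+2) 2
  have h : (((n+2+1) * (n+2).choose 2 : ℕ):ℚ) = _ := congrArg _ this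
  push_cast [Nat.cast_choose_two] at h
  linarith

theorem b_ge (n k : ℕ) (hn : 2 ≤ n) : 3 * ((k:ℚ)+3) ≤ ((n+k+3).choose (k+2) : ℚ) := by
  have hn' : (2:ℚ) ≤ n := by exact_mod_cast hn
  induction k with
  | zero =>
    have := b_zero n
    simp only [Nat.add_zero, Nat.zero_add, this]
    push_cast
    nlinarith
  | succ k ih =>
    have := b_rec n k
    have hk : (0:ℚ) ≤ k := by positivity
    push_cast
    have h1 : ((k:ℚ)+6) * (3*(k+3)) ≤ ((n:ℚ)+k+4) * ((n+k+3).choose (k+2) : ℚ) := by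
      apply mul_le_mul <;> first | linarith | positivity
    rw [this] at h1
    have h2 : 3 * ((k:ℚ)+6) ≤ ((n+(k+1)+3).choose (k+1+2) : ℚ) := by
      have h3 : (0:ℚ) < k+3 := by positivity
      refine le_of_mul_le_mul_right ?_ h3
      linarith
    linarith

theorem main_aux (n e m k : ℕ) (hn : 2 ≤ n) (he : 1 ≤ e) (hm : 2 ≤ m) (hD : n + 1 = e * m) :
    ((n+k+3).choose (k+3) : ℚ) + e * (((n+k+3).choose (k+2) : ℚ) - (k+3))
      + ((n:ℚ)+1) * (((k:ℚ)+2) * (n-1) + m - 2) ≤ ((n:ℚ)+1)^(k+3) := by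
  have hn' : (2:ℚ) ≤ n := by exact_mod_cast hn
  have hm' : (2:ℚ) ≤ m := by exact_mod_cast hm
  have he' : (1:ℚ) ≤ e := by exact_mod_cast he
  have hD' : (n:ℚ)+1 = e * m := by exact_mod_cast hD
  induction k with
  | zero =>
    have h := base_aux e m he hm (by omega)
    have := b_zero n
    have := a_zero n
    rw [← hD'] at h
    simp only [Nat.add_zero, Nat.zero_add, *]
    rw [← hD']
    push_cast
    linarith
  | succ k ih =>
    have hk : (0:ℚ) ≤ k := by positivity
    have ha := a_rec n k
    have hb := b_rec n k
    have hbg := b_ge n k hn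
    have ha0 : (0:ℚ) ≤ ((n+k+3).choose (k+3) : ℚ) := by positivity
    generalize ((n+k+3).choose (k+3) : ℚ) = a at *
    generalize ((n+k+3).choose (k+2) : ℚ) = b at *
    generalize ((n+(k+1)+3).choose (k+1+3) : ℚ) = a' at *
    generalize ((n+(k+1)+3).choose (k+1+2) : ℚ) = b' at *
    have h1 : a' ≤ (n+1) * a := by
      have h3 : (0:ℚ) < k+4 := by positivity
      refine le_of_mul_le_mul_right ?_ h3
      rw [← ha]
      nlinarith [mul_nonneg ha0 (mul_nonneg (by linarith : (0:ℚ) ≤ n) (by linarith : (0:ℚ) ≤ k+3))]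
    have h2 : b' - (k+4) ≤ (n+1) * (b - (k+3)) := by
      have h3 : (0:ℚ) < k+3 := by positivity
      refine le_of_mul_le_mul_right ?_ h3
      have h4 : (0:ℚ) ≤ (n+1)*(k+3) - (n+k+4) := by nlinarith
      have h5 := mul_le_mul_of_nonneg_right hbg h4
      have h6 : (n+1:ℚ)*(k+3) - (k+4) ≤ 3 * ((n+1)*(k+3) - (n+k+4)) := by nlinarith
      have h7 := mul_le_mul_of_nonneg_right h6 h3.le
      linarith
    have h2' := mul_le_mul_of_nonneg_left h2 (by linarith : (0:ℚ) ≤ e)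
    have h3 : ((k:ℚ)+3) * (n-1) + m - 2 ≤ (n+1) * (((k:ℚ)+2) * (n-1) + m - 2) := by
      have : 0 ≤ (k:ℚ) * (n-1) := mul_nonneg hk (by linarith)
      have h8 : (n:ℚ) - 1 ≤ ((k:ℚ)+2) * (n-1) + m - 2 := by linarith
      nlinarith
    have h3' := mul_le_mul_of_nonneg_left h3 (by linarith : (0:ℚ) ≤ n+1)
    have h9 := mul_le_mul_of_nonneg_left ih (by linarith : (0:ℚ) ≤ n+1)
    rw [show k+1+3 = (k+3)+1 by ring, pow_succ]
    push_cast
    linarith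

theorem stmt_17 (d D e : ℕ) (hd : 3 ≤ d) (hD : 3 ≤ D) (he : 1 ≤ e) (heD : e < D)
    (hdvd : e ∣ D) :
    ((D : ℚ) / e) * (((d : ℚ) - 1) * ((D : ℚ) - 2) + (D : ℚ) / e - 2)
      ≤ (D : ℚ) ^ d / e - (((D : ℚ) / e + d) / ((D : ℚ) + d)) * (Nat.choose (D + d) d : ℚ)
        + d := by
  obtain ⟨m, hm⟩ := hdvd
  have hm2 : 2 ≤ m := by
    by_contra h
    have : m ≤ 1 := by omega
    have := Nat.mul_le_mul_left e this
    omega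
  obtain ⟨k, rfl⟩ := Nat.exists_eq_add_of_le' hd
  obtain ⟨n, rfl⟩ : ∃ n, D = n + 1 := ⟨D - 1, by omega⟩
  have h := main_aux n e m k (by omega) he hm2 hm
  have e0 : (0:ℚ) < e := by exact_mod_cast he
  have hq : (((n+1:ℕ):ℚ)) / e = m := by
    rw [hm]; push_cast; field_simp
  have hmq : (n:ℚ)+1 = e * m := by exact_mod_cast hm
  have hp : ((n+1+(k+3)).choose (k+3) : ℚ)
      = ((n+k+3).choose (k+2) : ℚ) + ((n+k+3).choose (k+3) : ℚ) := by
    rw [show n+1+(k+3) = (n+k+3)+1 by ring, Nat.choose_succ_succ]; push_cast; rfl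
  have hb := b_rec n k
  rw [show n+(k+1)+3 = n+1+(k+3) by ring, show k+1+2 = k+3 by ring, hp] at hb
  rw [hq, hp]
  generalize ((n+k+3).choose (k+3) : ℚ) = a at *
  generalize ((n+k+3).choose (k+2) : ℚ) = b at *
  have hX : (((m:ℚ) + ((k+3:ℕ):ℚ)) / (((n+1:ℕ):ℚ) + ((k+3:ℕ):ℚ))) * (b + a) = a / e + b := by
    have : (0:ℚ) < n+1+(k+3) := by positivity
    push_cast
    rw [div_mul_eq_mul_div, div_eq_iff this.ne']
    field_simp
    have h1 : ((n:ℚ)+1) * b = (k+3) * a := by linarith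
    rw [hmq] at h1 ⊢
    linear_combination (1 - (e:ℚ)) * h1
  rw [hX]
  refine le_of_mul_le_mul_left ?_ e0
  have h5 : (e:ℚ) * (((n+1:ℕ):ℚ) ^ (k+3) / e - (a / e + b) + ((k+3:ℕ):ℚ))
      = ((n:ℚ)+1)^(k+3) - a - e * (b - (k+3)) := by
    push_cast; field_simp; ring
  rw [h5]
  push_cast
  rw [← mul_assoc, ← hmq]
  linarith
end

section
/- Let d ≥ 3 and D ≥ 3 be integers. Then (d−1)(D−2) + C(D+d−1, d−1) ≤ D^{d−1} + d, where C(n, k) denotes the binomial coefficient n choose k; equivalently, (d−1)(D−2) ≤ D^{d−1} − C(D+d−1, d−1) + d. -/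
theorem aux_18 (m j : ℕ) :
    Nat.choose (m + 3 + (j + 2)) (j + 2) + (j + 2) * m ≤ (m + 3) ^ (j + 2) + 1 := by
  induction j with
  | zero =>
    have h2 : Nat.choose (m + 3 + (0 + 2)) (0 + 2) * 2 = (m + 5) * (m + 4) := by
      have := Nat.add_one_mul_choose_eq (m + 4) 1
      simp only [Nat.choose_one_right] at this
      simpa using this.symm
    have h3 : m ≤ m * m := Nat.le_mul_self m
    simp only [zero_add] at *
    nlinarith
  | succ j ih =>
    have h := Nat.add_one_mul_choose_eq (m + 3 + (j + 2)) (j + 2)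
    have e : m + 3 + (j + 1 + 2) = m + 3 + (j + 2) + 1 := by ring
    have e2 : j + 1 + 2 = j + 2 + 1 := by ring
    rw [e, e2, pow_succ]
    generalize Nat.choose (m + 3 + (j + 2) + 1) (j + 2 + 1) = C' at *
    generalize Nat.choose (m + 3 + (j + 2)) (j + 2) = C at *
    have hP : 1 ≤ (m + 3) ^ (j + 2) := Nat.one_le_pow _ _ (by omega)
    generalize (m + 3) ^ (j + 2) = P at *
    have h3 : 3 * C' ≤ (m + 6) * C := by
      refine le_of_mul_le_mul_left (a := j + 3) ?_ (by omega)
      have : 0 ≤ C * (j * (m + 3)) := Nat.zero_le _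
      nlinarith
    have h4 := Nat.mul_le_mul_left (m + 6) ih
    have h5 : (2 * m + 3) * 1 ≤ (2 * m + 3) * P := Nat.mul_le_mul_left _ hP
    have h6 : 0 ≤ j * m := Nat.zero_le _
    have h7 : 0 ≤ j * m * m := Nat.zero_le _
    have h8 : 0 ≤ m * m := Nat.zero_le _
    nlinarith

theorem stmt_18 (d D : ℕ) (hd : 3 ≤ d) (hD : 3 ≤ D) :
    (d - 1) * (D - 2) + Nat.choose (D + d - 1) (d - 1) ≤ D ^ (d - 1) + d := by
  obtain ⟨j, rfl⟩ := Nat.exists_eq_add_of_le' hd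
  obtain ⟨m, rfl⟩ := Nat.exists_eq_add_of_le' hD
  have h := aux_18 m j
  have e1 : j + 3 - 1 = j + 2 := by omega
  have e2 : m + 3 - 2 = m + 1 := by omega
  have e3 : m + 3 + (j + 3) - 1 = m + 3 + (j + 2) := by omega
  rw [e1, e2, e3]
  linarith
end

section
/- Let A = {(0,0), (4,0), (0,4), (3,1), (1,3), (2,0), (0,2)} ⊆ ℕ². Then for every natural number s ≥ 2, the s-fold sumset of A equals sA = {y ∈ ℕ² : y₁ + y₂ is even and y₁ + y₂ ≤ 4s} \ {(1,1)}. -/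
open Pointwise

def genL : List (ℕ × ℕ) := [(0,0),(4,0),(0,4),(3,1),(1,3),(2,0),(0,2)]

theorem vec_ext (x : Fin 2 → ℕ) (a b : ℕ) : x = ![a, b] ↔ x 0 = a ∧ x 1 = b := by
  constructor
  · rintro rfl; simp
  · rintro ⟨h0, h1⟩; ext i; fin_cases i <;> simp [h0, h1]

theorem mem_gen (x : Fin 2 → ℕ) :
    x ∈ ({![0, 0], ![4, 0], ![0, 4], ![3, 1], ![1, 3], ![2, 0], ![0, 2]} :
        Set (Fin 2 → ℕ)) ↔ (x 0, x 1) ∈ genL := by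
  simp only [Set.mem_insert_iff, Set.mem_singleton_iff, vec_ext, genL, List.mem_cons,
    Prod.mk.injEq, List.not_mem_nil, or_false]

theorem base_dec (a : ℕ) (ha : a < 9) (b : ℕ) (hb : b < 9) (h1 : (a + b) % 2 = 0)
    (h2 : a + b ≤ 8) (h3 : ¬ (a = 1 ∧ b = 1)) :
    ∃ p ∈ genL, ∃ q ∈ genL, p.1 + q.1 = a ∧ p.2 + q.2 = b := by
  have key : ∀ a : Fin 9, ∀ b : Fin 9, (a.1 + b.1) % 2 = 0 ∧ a.1 + b.1 ≤ 8 ∧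
      ¬ (a.1 = 1 ∧ b.1 = 1) →
      (genL.any fun p => genL.any fun q => p.1 + q.1 == a.1 && p.2 + q.2 == b.1) = true := by
    decide +kernel
  have := key ⟨a, ha⟩ ⟨b, hb⟩ ⟨h1, h2, h3⟩
  simpa only [List.any_eq_true, Bool.and_eq_true, beq_iff_eq] using this

theorem base_dec' : ∀ p ∈ genL, ∀ q ∈ genL,
    (p.1 + q.1 + (p.2 + q.2)) % 2 = 0 ∧ p.1 + q.1 + (p.2 + q.2) ≤ 8 ∧
      ¬ (p.1 + q.1 = 1 ∧ p.2 + q.2 = 1) := by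
  decide

theorem stmt_19 (s : ℕ) (hs : 2 ≤ s) :
    sumset ({![0, 0], ![4, 0], ![0, 4], ![3, 1], ![1, 3], ![2, 0], ![0, 2]} :
        Set (Fin 2 → ℕ)) s
      = {y : Fin 2 → ℕ | Even (y 0 + y 1) ∧ y 0 + y 1 ≤ 4 * s} \ {![1, 1]} := by
  induction s, hs using Nat.le_induction with
  | base =>
    ext y
    simp only [sumset, Set.mem_sdiff, Set.mem_ofPred_eq, Set.mem_singleton_iff, vec_ext,
      Nat.even_iff, Set.add_singleton, add_zero, Set.image_id', Set.mem_add]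
    constructor
    · rintro ⟨p, hp, q, hq, rfl⟩
      rw [mem_gen] at hp hq
      have := base_dec' _ hp _ hq
      simp only [Pi.add_apply]
      omega
    · rintro ⟨⟨h1, h2⟩, h3⟩
      obtain ⟨p, hp, q, hq, e1, e2⟩ :=
        base_dec (y 0) (by omega) (y 1) (by omega) h1 (by omega) h3
      refine ⟨![p.1, p.2], (mem_gen _).2 (by simpa using hp), ![q.1, q.2],
        (mem_gen _).2 (by simpa using hq), ?_⟩
      ext i; fin_cases i <;> simp [e1, e2]
  | succ s hs ih =>
    ext y
    rw [sumset, ih]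
    simp only [Set.mem_sdiff, Set.mem_ofPred_eq, Set.mem_singleton_iff, vec_ext,
      Nat.even_iff, Set.mem_add]
    constructor
    · rintro ⟨p, hp, q, ⟨⟨h1, h2⟩, h3⟩, rfl⟩
      rw [mem_gen] at hp
      simp only [genL, List.mem_cons, Prod.mk.injEq, List.not_mem_nil, or_false] at hp
      simp only [Pi.add_apply]
      omega
    · rintro ⟨⟨h1, h2⟩, h3⟩
      by_cases h : y 0 + y 1 ≤ 4 * s
      · exact ⟨![0, 0], by simp, y, ⟨⟨h1, h⟩, h3⟩, by ext i; fin_cases i <;> simp⟩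
      by_cases h4 : 4 ≤ y 0
      · refine ⟨![4, 0], by simp, ![y 0 - 4, y 1], ?_, ?_⟩
        · simp only [Matrix.cons_val_zero, Matrix.cons_val_one]
          omega
        · ext i; fin_cases i <;> simp
          omega
      · refine ⟨![0, 4], by simp, ![y 0, y 1 - 4], ?_, ?_⟩
        · simp only [Matrix.cons_val_zero, Matrix.cons_val_one]
          omega
        · ext i; fin_cases i <;> simp
          omega
end
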